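/- Let 𝒯 be a finite set of rhombus shapes and let X be a subshift of edge-to-edge 𝒯-tilings defined by a computable enumeration ℱ = (f_n) of forbidden patterns. Then the decision problem Domino(X) — given a finite 𝒯-tileset 𝐓, decide whether there exists a valid 𝐓-tiling x of ℝ² with π(x) ∈ X — is co-computably enumerable (Π⁰₁): there is a total computable function g : dom × ℕ → {0,1} such that Domino(X)(𝐓) holds if and only if g(𝐓,n) = 1 for every n ∈ ℕ. -/

import Mathlib

open Set Metric

noncomputable section

/-- Points of the euclidean plane. -/
abbrev Pt : Type := EuclideanSpace ℝ (Fin 2)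

/-- A rhombus tile in the plane, given by a position (a distinguished vertex)
and its two edge vectors. -/
structure Rhombus where
  pos : Pt
  u : Pt
  v : Pt

namespace Rhombus

/-- A genuine rhombus: linearly independent edge vectors of equal euclidean length. -/
def IsValid (r : Rhombus) : Prop :=
  LinearIndependent ℝ ![r.u, r.v] ∧ ‖r.u‖ = ‖r.v‖

/-- The support of a rhombus: the closed parallelogram it spans. -/
def support (r : Rhombus) : Set Pt :=
  {x | ∃ s t : ℝ, s ∈ Icc (0 : ℝ) 1 ∧ t ∈ Icc (0 : ℝ) 1 ∧ x = r.pos + s • r.u + t • r.v}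

/-- The four vertices of a rhombus. -/
def vertices (r : Rhombus) : Set Pt :=
  {r.pos, r.pos + r.u, r.pos + r.v, r.pos + r.u + r.v}

/-- The four (closed) edges of a rhombus, indexed as in the paper:
edge `0` from `pos` to `pos + u`, edge `1` from `pos + u` to `pos + u + v`,
edge `2` from `pos + u + v` to `pos + v`, edge `3` from `pos + v` to `pos`. -/
def edge (r : Rhombus) : Fin 4 → Set Pt :=
  ![segment ℝ r.pos (r.pos + r.u),
    segment ℝ (r.pos + r.u) (r.pos + r.u + r.v),
    segment ℝ (r.pos + r.u + r.v) (r.pos + r.v),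
    segment ℝ (r.pos + r.v) r.pos]

/-- The set of edges of a rhombus. -/
def edges (r : Rhombus) : Set (Set Pt) := Set.range r.edge

/-- Translation of a rhombus by a vector. -/
def translate (r : Rhombus) (w : Pt) : Rhombus := ⟨r.pos + w, r.u, r.v⟩

/-- The center of a rhombus. -/
def center (r : Rhombus) : Pt := r.pos + (2⁻¹ : ℝ) • r.u + (2⁻¹ : ℝ) • r.v

/-- Two rhombi are translates of each other (same shape up to translation). -/
def SameShape (r s : Rhombus) : Prop := r.u = s.u ∧ r.v = s.v

/-- `w` is one of the two edge directions of `r` (up to sign). -/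
def HasEdgeDir (r : Rhombus) (w : Pt) : Prop :=
  r.u = w ∨ r.u = -w ∨ r.v = w ∨ r.v = -w

end Rhombus

/-- Two rhombi are in edge-to-edge position: they are disjoint, share exactly one
common vertex, or share exactly one full common edge. -/
def EdgeToEdgePair (r s : Rhombus) : Prop :=
  r.support ∩ s.support = ∅ ∨
  (∃ p, p ∈ r.vertices ∧ p ∈ s.vertices ∧ r.support ∩ s.support = {p}) ∨
  (∃ e, e ∈ r.edges ∧ e ∈ s.edges ∧ r.support ∩ s.support = e)

/-- An edge-to-edge rhombus tiling of the plane: a covering of the plane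
without overlap where any two tiles are disjoint, share exactly one vertex or
share a full common edge. -/
def IsTiling (x : Set Rhombus) : Prop :=
  (∀ r ∈ x, r.IsValid) ∧
  (⋃ r ∈ x, r.support) = univ ∧
  ∀ r ∈ x, ∀ s ∈ x, r ≠ s → EdgeToEdgePair r s

/-- Every tile of `x` is a translate of a shape of the shapeset `T`. -/
def UsesShapes (T : Set Rhombus) (x : Set Rhombus) : Prop :=
  ∀ r ∈ x, ∃ s ∈ T, r.SameShape s

/-- An edge-to-edge tiling whose tiles are translates of shapes of `T`. -/
def IsTilingOn (T : Set Rhombus) (x : Set Rhombus) : Prop :=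
  IsTiling x ∧ UsesShapes T x

/-- Support of a patch. -/
def PatchSupport (P : Set Rhombus) : Set Pt := ⋃ r ∈ P, r.support

/-- A patch: a finite nonempty edge-to-edge set of rhombi whose support is
simply connected (no holes). -/
def IsPatch (P : Set Rhombus) : Prop :=
  P.Finite ∧ P.Nonempty ∧ (∀ r ∈ P, r.IsValid) ∧
  (∀ r ∈ P, ∀ s ∈ P, r ≠ s → EdgeToEdgePair r s) ∧
  SimplyConnectedSpace (PatchSupport P)

/-- Translation of a set of rhombi. -/
def translatePatch (P : Set Rhombus) (w : Pt) : Set Rhombus :=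
  (fun r => r.translate w) '' P

/-- The pattern `f` appears in `x`: some translate of `f` is a sub-collection of `x`. -/
def Appears (f : Set Rhombus) (x : Set Rhombus) : Prop :=
  ∃ w : Pt, translatePatch f w ⊆ x

/-- Vertices of a patch. -/
def PatchVertices (P : Set Rhombus) : Set Pt := ⋃ r ∈ P, r.vertices

/-- The support of `P` contains a disk of radius `ρ` centered at a vertex of `P`. -/
def HasRadius (P : Set Rhombus) (ρ : ℝ) : Prop :=
  ∃ c ∈ PatchVertices P, closedBall c ρ ⊆ PatchSupport P

/-- `P` has minimal radius `ρ`: its support contains a disk of radius `ρ` centered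
at one of its vertices, and removing any tile breaks this property. -/
def MinimalRadius (P : Set Rhombus) (ρ : ℝ) : Prop :=
  HasRadius P ρ ∧ ∀ r ∈ P, ¬ HasRadius (P \ {r}) ρ

/-- A rhombus Wang tile: a rhombus with a colour (a natural number) on each edge. -/
structure ColoredRhombus where
  shape : Rhombus
  color : Fin 4 → ℕ

namespace ColoredRhombus

def translate (t : ColoredRhombus) (w : Pt) : ColoredRhombus :=
  ⟨t.shape.translate w, t.color⟩

/-- Two coloured tiles are equal up to translation. -/
def SameTile (t s : ColoredRhombus) : Prop :=
  t.shape.SameShape s.shape ∧ t.color = s.color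

end ColoredRhombus

/-- The colour-erasing operator `π`. -/
def eraseColors (x : Set ColoredRhombus) : Set Rhombus := ColoredRhombus.shape '' x

def translateColoredPatch (P : Set ColoredRhombus) (w : Pt) : Set ColoredRhombus :=
  (fun t => t.translate w) '' P

/-- Any two tiles sharing an edge carry the same colour on the shared edge. -/
def ColorMatching (x : Set ColoredRhombus) : Prop :=
  ∀ t ∈ x, ∀ s ∈ x, t.shape ≠ s.shape →
    ∀ i j : Fin 4, t.shape.edge i = s.shape.edge j → t.color i = s.color j

/-- No two distinct coloured tiles occupy the same rhombus. -/
def ShapeInjective (x : Set ColoredRhombus) : Prop :=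
  ∀ t ∈ x, ∀ s ∈ x, t.shape = s.shape → t = s

/-- A valid tiling by rhombus Wang tiles. -/
def IsColoredTiling (x : Set ColoredRhombus) : Prop :=
  IsTiling (eraseColors x) ∧ ShapeInjective x ∧ ColorMatching x

/-- A valid patch of rhombus Wang tiles. -/
def IsColoredPatch (x : Set ColoredRhombus) : Prop :=
  IsPatch (eraseColors x) ∧ ShapeInjective x ∧ ColorMatching x

/-- All tiles of `x` are translates of tiles of the tileset `T`. -/
def TilesFrom (T : Set ColoredRhombus) (x : Set ColoredRhombus) : Prop :=
  ∀ t ∈ x, ∃ s ∈ T, t.SameTile s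

/-- A subshift on the shapeset `T`: a set of `T`-tilings that is invariant under
translation and closed for the tiling topology (a tiling all of whose finite
patterns appear in tilings of `X` belongs to `X`). -/
def IsSubshift (T : Set Rhombus) (X : Set (Set Rhombus)) : Prop :=
  (∀ x ∈ X, IsTilingOn T x) ∧
  (∀ x ∈ X, ∀ w : Pt, translatePatch x w ∈ X) ∧
  (∀ x, IsTilingOn T x →
    (∀ P, P ⊆ x → P.Finite → P.Nonempty → ∃ y ∈ X, Appears P y) → x ∈ X)

/-- The shape `r` is uniformly recurrent in the tiling `x`: for some `R > 0`,
every disk of radius `R` contains an occurrence (a translate) of `r`. -/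
def UniformlyRecurrentIn (r : Rhombus) (x : Set Rhombus) : Prop :=
  ∃ R : ℝ, 0 < R ∧ ∀ p : Pt, ∃ s ∈ x, s.SameShape r ∧ s.support ⊆ closedBall p R

/-- A shape uniformly recurrent subshift: every shape appearing somewhere in `X`
is uniformly recurrent in every tiling of `X`. -/
def ShapeUniformlyRecurrent (X : Set (Set Rhombus)) : Prop :=
  ∀ r : Rhombus, (∃ y ∈ X, ∃ s ∈ y, s.SameShape r) →
    ∀ x ∈ X, UniformlyRecurrentIn r x

/-- The restriction of `X` to the tilings using only shapes of `T'`. -/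
def restrictShapes (T' : Set Rhombus) (X : Set (Set Rhombus)) : Set (Set Rhombus) :=
  {x ∈ X | UsesShapes T' x}

/-- The subshift on `T` defined by the sequence `F` of forbidden patterns. -/
def SubshiftOfForbidden (T : Set Rhombus) (F : ℕ → Set Rhombus) : Set (Set Rhombus) :=
  {x | IsTilingOn T x ∧ ∀ n : ℕ, ¬ Appears (F n) x}

/-- A chain of rhombuses of normal vector `w` in the tiling `x`: a bi-infinite
sequence of tiles in which any two consecutive tiles share a full common edge of
direction `w`, the chain crossing each of its tiles from one of its two
`w`-edges to the other one. -/
structure Chain (x : Set Rhombus) (w : Pt) where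
  seq : ℤ → Rhombus
  mem : ∀ n : ℤ, seq n ∈ x
  shares : ∀ n : ℤ, ∃ a : Pt,
    segment ℝ a (a + w) ∈ (seq n).edges ∧
    segment ℝ a (a + w) ∈ (seq (n + 1)).edges ∧
    (seq n).support ∩ (seq (n + 1)).support = segment ℝ a (a + w)
  progress : ∀ n : ℤ,
    (seq (n - 1)).support ∩ (seq n).support ≠ (seq n).support ∩ (seq (n + 1)).support

/-- The set of tiles of a chain. -/
def Chain.tiles {x : Set Rhombus} {w : Pt} (c : Chain x w) : Set Rhombus :=
  Set.range c.seq

/-- A symbolic Wang tile on the shapeset indexed by `Fin k`: a shape index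
together with the four edge colours `(a₀, a₁, a₂, a₃)`. -/
abbrev SymbTile (k : ℕ) : Type := Fin k × ℕ × ℕ × ℕ × ℕ

/-- The colours of a symbolic tile, as a function on edge indices. -/
def SymbTile.colors {k : ℕ} (t : SymbTile k) : Fin 4 → ℕ :=
  ![t.2.1, t.2.2.1, t.2.2.2.1, t.2.2.2.2]

/-- The geometric coloured tile `t` is a translate of the symbolic tile `p`. -/
def Realizes {k : ℕ} (shapes : Fin k → Rhombus) (t : ColoredRhombus) (p : SymbTile k) :
    Prop :=
  t.shape.SameShape (shapes p.1) ∧ t.color = SymbTile.colors p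

/-- The Domino problem on the subshift `X`: given a tileset `T`, decide whether
there is a valid tiling by translates of tiles of `T` whose colour-erased image
belongs to `X`. -/
def DominoPred {k : ℕ} (shapes : Fin k → Rhombus) (X : Set (Set Rhombus))
    (T : List (SymbTile k)) : Prop :=
  ∃ x : Set ColoredRhombus, IsColoredTiling x ∧
    (∀ t ∈ x, ∃ p ∈ T, Realizes shapes t p) ∧ eraseColors x ∈ X

/-- A displacement code: a formal integer combination of edge vectors of the shapes. -/
abbrev Disp (k : ℕ) : Type := List (Fin k × ℤ × ℤ)

/-- The vector coded by a displacement code. -/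
def dispVec {k : ℕ} (shapes : Fin k → Rhombus) (d : Disp k) : Pt :=
  (d.map (fun e => (e.2.1 : ℝ) • (shapes e.1).u + (e.2.2 : ℝ) • (shapes e.1).v)).sum

/-- A code for a pattern of (uncoloured) shapes: each entry is a shape index and
the displacement of the corresponding tile. -/
abbrev PatternCode (k : ℕ) : Type := List (Fin k × Disp k)

/-- The pattern coded by a pattern code. -/
def decodePattern {k : ℕ} (shapes : Fin k → Rhombus) (c : PatternCode k) : Set Rhombus :=
  {r | ∃ e ∈ c, r = (shapes e.1).translate (dispVec shapes e.2)}

/-- A code for a pattern of coloured tiles. -/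
abbrev ColoredCode (k : ℕ) : Type := List (SymbTile k × Disp k)

/-- The coloured pattern coded by a coloured pattern code. -/
def decodeColored {k : ℕ} (shapes : Fin k → Rhombus) (c : ColoredCode k) :
    Set ColoredRhombus :=
  {t | ∃ e ∈ c,
    t = ColoredRhombus.mk ((shapes e.1.1).translate (dispVec shapes e.2))
          (SymbTile.colors e.1)}

/-- A decision problem is `Π⁰₁` (co-computably enumerable): there is a total
computable `f` such that `A x ↔ ∀ n, f x n = true`. -/
def Pi01 {α : Type} [Primcodable α] (A : α → Prop) : Prop :=
  ∃ f : α → ℕ → Bool, Computable₂ f ∧ ∀ a, A a ↔ ∀ n : ℕ, f a n = true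

/-- A decision problem is `Π⁰₁`-hard: every `Π⁰₁` problem many-one reduces to it. -/
def Pi01Hard {α : Type} [Primcodable α] (A : α → Prop) : Prop :=
  ∀ (β : Type) [Primcodable β], ∀ B : β → Prop, Pi01 B → ManyOneReducible B A

/-! ### Part A: computability -/

theorem int_primrec_toSum : Primrec (fun z : ℤ => Equiv.intEquivNatSumNat z) := by
  rw [← Primrec.encode_iff]
  refine (Primrec.encode (α := ℤ)).of_eq fun z => ?_
  rcases z with n | n <;> rfl

theorem int_primrec_ofNat : Primrec (fun n : ℕ => (Int.ofNat n)) := by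
  rw [← Primrec.encode_iff]
  exact Primrec.nat_double.of_eq fun n => rfl

theorem int_primrec_negSucc : Primrec (fun n : ℕ => (Int.negSucc n)) := by
  rw [← Primrec.encode_iff]
  exact Primrec.nat_double_succ.of_eq fun n => rfl

theorem int_primrec_toNat : Primrec (fun z : ℤ => z.toNat) := by
  have := Primrec.sumCasesOn (f := fun z : ℤ => Equiv.intEquivNatSumNat z)
    (g := fun _ n => n) (h := fun _ _ => 0) int_primrec_toSum Primrec.snd.to₂ (Primrec.const 0).to₂
  refine this.of_eq fun z => ?_
  rcases z with n | n <;> rfl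

theorem int_primrec_negToNat : Primrec (fun z : ℤ => (-z).toNat) := by
  have := Primrec.sumCasesOn (f := fun z : ℤ => Equiv.intEquivNatSumNat z)
    (g := fun _ _ => 0) (h := fun _ n => n + 1) int_primrec_toSum (Primrec.const 0).to₂
    (Primrec.succ.comp Primrec.snd).to₂
  refine this.of_eq fun z => ?_
  rcases z with n | n
  · change 0 = (-(n : ℤ)).toNat
    omega
  · rfl

theorem int_primrec_natSub : Primrec₂ (fun a b : ℕ => (a : ℤ) - b) := by
  have : Primrec (fun p : ℕ × ℕ => if p.2 ≤ p.1 then Int.ofNat (p.1 - p.2)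
      else Int.negSucc (p.2 - p.1 - 1)) := by
    refine Primrec.ite (Primrec.nat_le.comp Primrec.snd Primrec.fst) ?_ ?_
    · exact int_primrec_ofNat.comp (Primrec.nat_sub.comp Primrec.fst Primrec.snd)
    · exact int_primrec_negSucc.comp (Primrec.nat_sub.comp
        (Primrec.nat_sub.comp Primrec.snd Primrec.fst) (Primrec.const 1))
  refine this.to₂.of_eq fun a b => ?_
  dsimp only
  split_ifs with h
  · simp; omega
  · rw [Int.negSucc_eq]; omega

theorem int_primrec_add : Primrec₂ (fun a b : ℤ => a + b) := by
  have : Primrec (fun p : ℤ × ℤ => ((p.1.toNat + p.2.toNat : ℕ) : ℤ) -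
      (((-p.1).toNat + (-p.2).toNat : ℕ) : ℤ)) := by
    refine int_primrec_natSub.comp ?_ ?_
    · exact Primrec.nat_add.comp (int_primrec_toNat.comp Primrec.fst)
        (int_primrec_toNat.comp Primrec.snd)
    · exact Primrec.nat_add.comp (int_primrec_negToNat.comp Primrec.fst)
        (int_primrec_negToNat.comp Primrec.snd)
  refine this.to₂.of_eq fun a b => ?_
  dsimp only
  omega

theorem int_primrec_mul : Primrec₂ (fun a b : ℤ => a * b) := by
  have : Primrec (fun p : ℤ × ℤ =>
      ((p.1.toNat * p.2.toNat + (-p.1).toNat * (-p.2).toNat : ℕ) : ℤ) -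
      ((p.1.toNat * (-p.2).toNat + (-p.1).toNat * p.2.toNat : ℕ) : ℤ)) := by
    have a1 := int_primrec_toNat.comp (Primrec.fst (α := ℤ) (β := ℤ))
    have a2 := int_primrec_toNat.comp (Primrec.snd (α := ℤ) (β := ℤ))
    have b1 := int_primrec_negToNat.comp (Primrec.fst (α := ℤ) (β := ℤ))
    have b2 := int_primrec_negToNat.comp (Primrec.snd (α := ℤ) (β := ℤ))
    exact int_primrec_natSub.comp
      (Primrec.nat_add.comp (Primrec.nat_mul.comp a1 a2) (Primrec.nat_mul.comp b1 b2))
      (Primrec.nat_add.comp (Primrec.nat_mul.comp a1 b2) (Primrec.nat_mul.comp b1 a2))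
  refine this.to₂.of_eq fun a b => ?_
  dsimp only
  have ha : a = (a.toNat : ℤ) - ((-a).toNat : ℤ) := by omega
  have hb : b = (b.toNat : ℤ) - ((-b).toNat : ℤ) := by omega
  conv_rhs => rw [ha, hb]
  push_cast
  ring

/-- Coded positions: elements of `ℤ^m`. -/
abbrev Posn (m : ℕ) : Type := Fin m → ℤ

theorem posn_primrec_add (m : ℕ) : Primrec₂ (fun a b : Posn m => a + b) := by
  have : Primrec₂ (fun (p : Posn m × Posn m) (i : Fin m) => p.1 i + p.2 i) :=
    int_primrec_add.comp
      (Primrec.fin_app.comp (Primrec.fst.comp Primrec.fst) Primrec.snd)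
      (Primrec.fin_app.comp (Primrec.snd.comp Primrec.fst) Primrec.snd)
  exact (Primrec.fin_curry.2 this).of_eq fun p => rfl

theorem posn_primrec_smul (m k : ℕ) (a : Fin k → Posn m) :
    Primrec₂ (fun (i : Fin k) (z : ℤ) => z • a i) := by
  have : Primrec₂ (fun (p : Fin k × ℤ) (l : Fin m) => p.2 * (a p.1) l) :=
    int_primrec_mul.comp (Primrec.snd.comp Primrec.fst)
      (Primrec.fin_app.comp ((Primrec.dom_finite a).comp (Primrec.fst.comp Primrec.fst))
        Primrec.snd)
  exact (Primrec.fin_curry.2 this).of_eq fun p => by ext l; simp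

theorem primrecPred_of_finite {α : Type} [Primcodable α] {s : Set α} (hs : s.Finite) :
    PrimrecPred (fun a => a ∈ s) := by
  induction s, hs using Set.Finite.induction_on with
  | empty => exact (Primrec.const false).primrecPred.of_eq (p := fun _ => false = true) (by simp)
  | insert _ _ ih =>
    rename_i b t _ _
    exact ((Primrec.eq.comp Primrec.id (Primrec.const b)).or ih).of_eq (by simp)

/-- A clause `(N, P)`: if all of `N` is in `v`, then so is some element of `P`. -/
def SatClause {V : Type} (v : Set V) (c : List V × List V) : Prop :=
  (∀ i ∈ c.1, i ∈ v) → ∃ i ∈ c.2, i ∈ v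

def bitOf (s i : ℕ) : Prop := s / 2 ^ i % 2 = 1

theorem bitOf_iff (s i : ℕ) : bitOf s i ↔ s.testBit i = true := by
  rw [bitOf, Nat.testBit_eq_decide_div_mod_eq]; simp

def badClause (p : (ℕ × ℕ) × (List ℕ × List ℕ)) : Prop :=
  (∀ i ∈ p.2.1, i < p.1.2 ∧ bitOf p.1.1 i) ∧ (∀ i ∈ p.2.2, i < p.1.2 ∧ ¬ bitOf p.1.1 i)

theorem nat_pow_primrec : Primrec₂ (fun a b : ℕ => a ^ b) :=
  Primrec₂.unpaired'.1 Nat.Primrec.pow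

theorem bitOf_primrec : PrimrecRel bitOf := by
  have : Primrec₂ (fun s i : ℕ => s / 2 ^ i % 2) :=
    Primrec.nat_mod.comp (Primrec.nat_div.comp Primrec.fst
      (nat_pow_primrec.comp (Primrec.const 2) Primrec.snd)) (Primrec.const 2)
  exact Primrec.eq.comp this (Primrec.const 1)

theorem badClause_primrec : PrimrecPred badClause := by
  refine PrimrecPred.and ?_ ?_
  · have h : PrimrecRel (fun (i : ℕ) (q : ℕ × ℕ) => i < q.2 ∧ bitOf q.1 i) :=
      PrimrecPred.and (Primrec.nat_lt.comp Primrec.fst (Primrec.snd.comp Primrec.snd))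
        (bitOf_primrec.comp (Primrec.fst.comp Primrec.snd) Primrec.fst)
    exact h.forall_mem_list.comp (Primrec.fst.comp Primrec.snd) Primrec.fst
  · have h : PrimrecRel (fun (i : ℕ) (q : ℕ × ℕ) => i < q.2 ∧ ¬ bitOf q.1 i) :=
      PrimrecPred.and (Primrec.nat_lt.comp Primrec.fst (Primrec.snd.comp Primrec.snd))
        (PrimrecPred.not (bitOf_primrec.comp (Primrec.fst.comp Primrec.snd) Primrec.fst))
    exact h.forall_mem_list.comp (Primrec.snd.comp Primrec.snd) Primrec.fst

def goodStage (q : List (List ℕ × List ℕ) × ℕ) : Prop :=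
  ∃ s < 2 ^ q.2, ∀ c ∈ q.1, ¬ badClause ((s, q.2), c)

theorem goodStage_primrec : PrimrecPred goodStage := by
  have h1 : PrimrecRel (fun (c : List ℕ × List ℕ) (q : ℕ × ℕ) => ¬ badClause (q, c)) :=
    PrimrecPred.not (badClause_primrec.comp (Primrec.pair Primrec.snd Primrec.fst))
  have h2 : PrimrecRel (fun (s : ℕ) (q : List (List ℕ × List ℕ) × ℕ) =>
      ∀ c ∈ q.1, ¬ badClause ((s, q.2), c)) :=
    h1.forall_mem_list.comp (Primrec.fst.comp Primrec.snd)
      (Primrec.pair Primrec.fst (Primrec.snd.comp Primrec.snd))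
  have h3 : Primrec (fun q : List (List ℕ × List ℕ) × ℕ => List.range (2 ^ q.2)) :=
    Primrec.list_range.comp (nat_pow_primrec.comp (Primrec.const 2) Primrec.snd)
  exact (PrimrecRel.comp (g := fun q => q) h2.exists_mem_list h3 Primrec.id).of_eq
    (by simp [goodStage])

/-- Effective compactness: satisfiability of a computable family of clauses is `Π⁰₁`. -/
theorem pi01_of_clauses_nat {α : Type} [Primcodable α] (A : α → Prop)
    (cl : α → ℕ → List ℕ × List ℕ) (hcl : Computable₂ cl)
    (h : ∀ a, A a ↔ ∃ v : Set ℕ, ∀ m, SatClause v (cl a m)) : Pi01 A := by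
  classical
  have hlist : Computable₂ (fun (a : α) (n : ℕ) => (List.range n).map (cl a)) := by
    have : Computable₂ (fun (a : α) (n : ℕ) =>
        (Nat.rec [] (fun m l => l ++ [cl a m]) n : List (List ℕ × List ℕ))) := by
      refine Computable.nat_rec (f := fun p : α × ℕ => p.2) (g := fun _ => [])
        (h := fun p q => q.2 ++ [cl p.1 q.1]) Computable.snd (Computable.const []) ?_
      exact (Primrec.list_concat.to_comp).comp (Computable.snd.comp Computable.snd)
        (hcl.comp (Computable.fst.comp Computable.fst) (Computable.fst.comp Computable.snd))
    refine this.of_eq fun p => ?_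
    obtain ⟨a, n⟩ := p
    dsimp only
    induction n with
    | zero => rfl
    | succ n ih => rw [List.range_succ, List.map_append, ← ih]; rfl
  refine ⟨fun a n => decide (goodStage ((List.range n).map (cl a), n)), ?_, fun a => ?_⟩
  · have hg : Computable (fun q => decide (goodStage q)) := by
      obtain ⟨i, hi⟩ := goodStage_primrec
      exact (hi.to_comp).of_eq fun q => by congr
    exact hg.comp (Computable.pair hlist Computable.snd)
  rw [h a]
  constructor
  · rintro ⟨v, hv⟩ n
    rw [decide_eq_true_iff]
    refine ⟨∑ i ∈ (Finset.range n).filter (· ∈ v), 2 ^ i, ?_, ?_⟩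
    · calc _ ≤ ∑ i ∈ Finset.range n, 2 ^ i :=
            Finset.sum_le_sum_of_subset (Finset.filter_subset _ _)
        _ < 2 ^ n := by
          have := Nat.geomSum_lt (m := 2) (n := n) (s := Finset.range n) le_rfl (by simp)
          exact this
    · have hb : ∀ i < n, bitOf (∑ i ∈ (Finset.range n).filter (· ∈ v), 2 ^ i) i ↔ i ∈ v := by
        intro i hi
        rw [bitOf_iff, ← Nat.mem_bitIndices, ← List.mem_toFinset,
          Finset.toFinset_bitIndices_sum_two_pow]
        simp [hi]
      intro c hc hbad
      obtain ⟨m, _, rfl⟩ := List.mem_map.1 hc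
      obtain ⟨h1, h2⟩ := hbad
      obtain ⟨i, hi, hiv⟩ := hv m (fun i hi => (hb i (h1 i hi).1).1 (h1 i hi).2)
      exact (h2 i hi).2 ((hb i (h2 i hi).1).2 hiv)
  · intro hn
    have hn' : ∀ n, ∃ s : ℕ, ∀ m < n, ¬ badClause ((s, n), cl a m) := by
      intro n
      obtain ⟨s, _, hs⟩ := of_decide_eq_true (hn n)
      exact ⟨s, fun m hm => hs _ (List.mem_map.2 ⟨m, List.mem_range.2 hm, rfl⟩)⟩
    choose s hs using hn'
    let U : Ultrafilter ℕ := Filter.hyperfilter ℕ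
    have hU : ∀ b : ℕ, ∀ᶠ n in (U : Filter ℕ), b < n := fun b => by
      have h1 : ∀ᶠ n in Filter.cofinite, b < n := by
        rw [Nat.cofinite_eq_atTop]; exact Filter.eventually_gt_atTop b
      exact Filter.hyperfilter_le_cofinite h1
    refine ⟨{i | ∀ᶠ n in (U : Filter ℕ), bitOf (s n) i}, fun m hN => ?_⟩
    by_contra hP
    push Not at hP
    have e1 : ∀ᶠ n in (U : Filter ℕ), ∀ i ∈ (cl a m).1, i < n ∧ bitOf (s n) i := by
      have := (Filter.eventually_all_finset (l := (U : Filter ℕ)) (cl a m).1.toFinset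
        (p := fun i n => i < n ∧ bitOf (s n) i)).2
        (fun i hi => (hU i).and (hN i (List.mem_toFinset.1 hi)))
      exact this.mono fun n h i hi => h i (List.mem_toFinset.2 hi)
    have e2 : ∀ᶠ n in (U : Filter ℕ), ∀ i ∈ (cl a m).2, i < n ∧ ¬ bitOf (s n) i := by
      have := (Filter.eventually_all_finset (l := (U : Filter ℕ)) (cl a m).2.toFinset
        (p := fun i n => i < n ∧ ¬ bitOf (s n) i)).2
        (fun i hi => (hU i).and (Ultrafilter.eventually_not.2 (hP i (List.mem_toFinset.1 hi))))
      exact this.mono fun n h i hi => h i (List.mem_toFinset.2 hi)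
    obtain ⟨n, hn1, hn2, hn3⟩ := (e1.and (e2.and (hU m))).exists
    exact hs n m hn3 ⟨hn1, hn2⟩

/-- Clause families over arbitrary coded variables and coded indices. -/
theorem pi01_of_clauses {α V J : Type} [Primcodable α] [Primcodable V] [Primcodable J]
    (A : α → Prop) (cl : α → J → List V × List V) (hcl : Computable₂ cl)
    (h : ∀ a, A a ↔ ∃ v : Set V, ∀ j, SatClause v (cl a j)) : Pi01 A := by
  let cl' : α → ℕ → List ℕ × List ℕ := fun a m =>
    ((Encodable.decode (α := J) m).map (fun j =>
      ((cl a j).1.map Encodable.encode, (cl a j).2.map Encodable.encode))).getD ([0], [0])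
  have hcl' : Computable₂ cl' := by
    have h2 : Primrec (fun c : List V × List V =>
        (c.1.map Encodable.encode, c.2.map Encodable.encode)) :=
      Primrec.pair (Primrec.list_map Primrec.fst (Primrec.encode.comp Primrec.snd).to₂)
        (Primrec.list_map Primrec.snd (Primrec.encode.comp Primrec.snd).to₂)
    have h3 : Computable (fun p : α × ℕ => (Encodable.decode (α := J) p.2).map (fun j =>
      ((cl p.1 j).1.map Encodable.encode, (cl p.1 j).2.map Encodable.encode))) := by
      refine Computable.option_map (Computable.decode.comp Computable.snd) ?_
      exact h2.to_comp.comp (hcl.comp (Computable.fst.comp Computable.fst) Computable.snd)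
    exact Computable.option_getD h3 (Computable.const ([0], [0]))
  refine pi01_of_clauses_nat A cl' hcl' fun a => (h a).trans ?_
  constructor
  · rintro ⟨v, hv⟩
    refine ⟨Encodable.encode '' v, fun m => ?_⟩
    rcases hd : Encodable.decode (α := J) m with _ | j
    · simp [cl', hd, SatClause]
    · simp only [cl', hd, SatClause, Option.map_some, Option.getD_some]
      intro hN
      obtain ⟨i, hi, hiv⟩ := hv j (fun i hi => by
        obtain ⟨i', hi', he⟩ := hN _ (List.mem_map_of_mem hi)
        rwa [← Encodable.encode_injective he])
      exact ⟨_, List.mem_map_of_mem hi, i, hiv, rfl⟩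
  · rintro ⟨v, hv⟩
    refine ⟨Encodable.encode ⁻¹' v, fun j => ?_⟩
    have := hv (Encodable.encode j)
    simp only [cl', Encodable.encodek, SatClause, Option.map_some, Option.getD_some] at this
    intro hN
    obtain ⟨i, hi, hiv⟩ := this (fun i hi => by
      obtain ⟨i', hi', rfl⟩ := List.mem_map.1 hi
      exact hN i' hi')
    obtain ⟨i', hi', rfl⟩ := List.mem_map.1 hi
    exact ⟨i', hi', hiv⟩

/-! ### Part B: the developing argument -/

/-- Radial projection on the ball of radius `r` is nonexpansive (in Hilbert space), used in the
form: there is a nonexpansive retraction moving points of the ball of radius `r + δ` by at most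
`δ`. -/
theorem exists_retraction (r δ : ℝ) (hr : 0 ≤ r) :
    ∃ π : Pt → Pt, (∀ q, ‖π q‖ ≤ r) ∧ (∀ q, ‖q‖ ≤ r → π q = q) ∧
      (∀ q, ‖q‖ ≤ r + δ → dist q (π q) ≤ δ ⊔ 0) ∧ ∀ q q', dist (π q) (π q') ≤ dist q q' := by
  have key : ∀ q : Pt, ∃ p : Pt, ‖p‖ ≤ r ∧ (‖q‖ ≤ r → p = q) ∧
      (‖q‖ ≤ r + δ → dist q p ≤ δ ⊔ 0) ∧ ∀ w : Pt, ‖w‖ ≤ r → inner ℝ (q - p) (w - p) ≤ 0 := by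
    intro q
    by_cases hq : ‖q‖ ≤ r
    · exact ⟨q, hq, fun _ => rfl, by simp, by simp⟩
    · push Not at hq
      have hq0 : 0 < ‖q‖ := lt_of_le_of_lt hr hq
      have hle : r / ‖q‖ ≤ 1 := (div_le_one hq0).2 hq.le
      have hsub : q - (r / ‖q‖) • q = (1 - r / ‖q‖) • q := by rw [sub_smul, one_smul]
      refine ⟨(r / ‖q‖) • q, ?_, fun h => absurd h (not_le.2 hq), fun h => ?_, fun w hw => ?_⟩
      · rw [norm_smul, Real.norm_eq_abs, abs_of_nonneg (by positivity), div_mul_cancel₀ _ hq0.ne']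
      · rw [dist_eq_norm, hsub, norm_smul, Real.norm_eq_abs, abs_of_nonneg (by linarith), sub_mul,
          div_mul_cancel₀ _ hq0.ne']
        refine le_sup_of_le_left (by linarith)
      · rw [hsub, real_inner_smul_left, inner_sub_right, real_inner_smul_right,
          real_inner_self_eq_norm_sq]
        have h1 : inner ℝ q w ≤ ‖q‖ * r :=
          (real_inner_le_norm q w).trans (mul_le_mul_of_nonneg_left hw hq0.le)
        have h2 : r / ‖q‖ * ‖q‖ ^ 2 = ‖q‖ * r := by field_simp
        rw [h2]
        exact mul_nonpos_of_nonneg_of_nonpos (by linarith) (by linarith)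
  choose π h1 h2 h3 h4 using key
  refine ⟨π, h1, h2, h3, fun q q' => ?_⟩
  have e1 := h4 q (π q') (h1 q')
  have e2 := h4 q' (π q) (h1 q)
  have e3 : inner ℝ (q - π q) (π q' - π q) + inner ℝ (q' - π q') (π q - π q') =
      ‖π q - π q'‖ ^ 2 - inner ℝ (q - q') (π q - π q') := by
    rw [← real_inner_self_eq_norm_sq, ← neg_sub (π q) (π q'), inner_neg_right, neg_add_eq_sub,
      ← inner_sub_left, ← inner_sub_left]
    congr 1
    abel
  have e4 := real_inner_le_norm (q - q') (π q - π q')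
  rw [dist_eq_norm, dist_eq_norm]
  by_contra hlt
  push Not at hlt
  have e5 : 0 ≤ ‖q - q'‖ := norm_nonneg _
  nlinarith

theorem developing {ι : Type} (supp : ι → Set Pt) (Adj : ι → ι → Prop) (δ : ℝ) (hδ : 0 < δ)
    (hconv : ∀ t, Convex ℝ (supp t))
    (hsymm : ∀ t s, Adj t s → Adj s t) (hrefl : ∀ t, Adj t t)
    (H2 : ∀ t s s', Adj t s → Adj t s' → ∀ q ∈ supp s, ∀ q' ∈ supp s', dist q q' ≤ δ → Adj s s')
    (H3 : ∀ t, ∀ p ∈ supp t, ∀ q, dist q p ≤ 2 * δ → ∃ s, Adj t s ∧ q ∈ supp s)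
    (t0 : ι) (h0 : (0 : Pt) ∈ supp t0) :
    ∃ Y : Set ι, (∀ p, ∃ t ∈ Y, p ∈ supp t) ∧
      ∀ t ∈ Y, ∀ s ∈ Y, (supp t ∩ supp s).Nonempty → Adj t s := by
  classical
  -- sections over balls
  let Sec : ℝ → (Pt → ι) → Prop := fun r τ => (∀ p, ‖p‖ ≤ r → p ∈ supp (τ p)) ∧
    ∀ p q, ‖p‖ ≤ r → ‖q‖ ≤ r → dist p q ≤ δ → Adj (τ p) (τ q)
  have hext : ∀ r, 0 ≤ r → ∀ τ, Sec r τ → ∃ τ', Sec (r + δ) τ' ∧ ∀ q, ‖q‖ ≤ r → τ' q = τ q := by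
    rintro r hr τ ⟨h1, h2⟩
    obtain ⟨π, hπ1, hπ2, hπ3, hπ4⟩ := exists_retraction r δ hr
    simp only [sup_of_le_left hδ.le] at hπ3
    have hex : ∀ q, ∃ s, ‖q‖ ≤ r + δ → (Adj (τ (π q)) s ∧ q ∈ supp s ∧ (‖q‖ ≤ r → s = τ q)) := by
      intro q
      by_cases hq : ‖q‖ ≤ r
      · refine ⟨τ q, fun _ => ⟨?_, h1 q hq, fun _ => rfl⟩⟩
        rw [hπ2 q hq]; exact hrefl _
      · by_cases hq' : ‖q‖ ≤ r + δ
        · obtain ⟨s, hs, hs'⟩ := H3 (τ (π q)) (π q) (h1 _ (hπ1 q)) q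
            (by have := hπ3 q hq'; linarith)
          exact ⟨s, fun _ => ⟨hs, hs', fun h => absurd h hq⟩⟩
        · exact ⟨t0, fun h => absurd h hq'⟩
    choose τ' hτ' using hex
    refine ⟨τ', ⟨fun p hp => (hτ' p hp).2.1, fun q q' hq hq' hd => ?_⟩,
      fun q hq => (hτ' q (by linarith)).2.2 hq⟩
    obtain ⟨a1, a2, -⟩ := hτ' q hq
    obtain ⟨b1, b2, -⟩ := hτ' q' hq'
    have hpp : dist (π q) (π q') ≤ δ := (hπ4 q q').trans hd
    have hadj : Adj (τ (π q)) (τ (π q')) := h2 _ _ (hπ1 q) (hπ1 q') hpp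
    obtain ⟨s, hs, hqs⟩ := H3 (τ (π q)) (π q) (h1 _ (hπ1 q)) q' (by
      have e1 := hπ3 q hq
      have e2 := dist_triangle q' q (π q)
      rw [dist_comm q' q] at e2
      linarith)
    have c1 : Adj (τ (π q')) s := H2 _ _ _ hadj hs _ (h1 _ (hπ1 q')) _ hqs (by
      rw [dist_comm]; exact hπ3 q' hq')
    have c2 : Adj s (τ' q') := H2 _ _ _ c1 b1 _ hqs _ b2 (by simpa using hδ.le)
    have c3 : Adj s (τ' q) := H2 _ _ _ hs a1 _ hqs _ a2 (by rw [dist_comm]; exact hd)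
    exact H2 _ _ _ c3 c2 _ a2 _ b2 hd
  -- sequence of extensions
  let S : ℕ → Type := fun n => {τ : Pt → ι // Sec (n * δ) τ}
  have hstep : ∀ n (τ : S n), ∃ τ' : S (n + 1), ∀ q, ‖q‖ ≤ n * δ → τ'.1 q = τ.1 q := by
    intro n τ
    obtain ⟨τ', h, h'⟩ := hext (n * δ) (by positivity) τ.1 τ.2
    refine ⟨⟨τ', ?_⟩, h'⟩
    have : ((n + 1 : ℕ) : ℝ) * δ = n * δ + δ := by push_cast; ring
    rw [this]; exact h
  choose nxt hnxt using hstep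
  have hbase : Sec ((0 : ℕ) * δ) (fun _ => t0) := by
    refine ⟨fun p hp => ?_, fun _ _ _ _ _ => hrefl _⟩
    have : p = 0 := by simpa using hp
    rw [this]; exact h0
  let σ : ∀ n, S n := fun n => Nat.rec ⟨_, hbase⟩ (fun n τ => nxt n τ) n
  have hσ : ∀ (n : ℕ) (q : Pt), ‖q‖ ≤ n * δ → (σ (n + 1)).1 q = (σ n).1 q := fun n q hq => hnxt n (σ n) q hq
  have hσ' : ∀ (n d : ℕ) (q : Pt), ‖q‖ ≤ n * δ → (σ (n + d)).1 q = (σ n).1 q := by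
    intro n d q hq
    induction d with
    | zero => rfl
    | succ d ih =>
      rw [← ih, ← add_assoc]
      refine hσ _ _ (hq.trans ?_)
      push_cast
      have : (0 : ℝ) ≤ d * δ := by positivity
      nlinarith
  have hN : ∀ q : Pt, ∃ n : ℕ, ‖q‖ ≤ n * δ := fun q => by
    obtain ⟨n, hn⟩ := exists_nat_ge (‖q‖ / δ)
    exact ⟨n, (div_le_iff₀ hδ).1 hn⟩
  choose N hN using hN
  let τ : Pt → ι := fun q => (σ (N q)).1 q
  have hτ : ∀ (q : Pt) (n : ℕ), ‖q‖ ≤ n * δ → τ q = (σ n).1 q := by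
    intro q n hq
    have e1 := hσ' n (N q) q hq
    have e2 := hσ' (N q) n q (hN q)
    rw [add_comm] at e2
    exact e2.symm.trans e1
  have t1 : ∀ p, p ∈ supp (τ p) := fun p => (σ (N p)).2.1 p (hN p)
  have t2 : ∀ p q, dist p q ≤ δ → Adj (τ p) (τ q) := by
    intro p q hd
    have m1 : ‖p‖ ≤ ((N p + N q : ℕ) : ℝ) * δ := (hN p).trans (by
      push_cast; have : (0 : ℝ) ≤ N q * δ := by positivity
      nlinarith)
    have m2 : ‖q‖ ≤ ((N p + N q : ℕ) : ℝ) * δ := (hN q).trans (by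
      push_cast; have : (0 : ℝ) ≤ N p * δ := by positivity
      nlinarith)
    rw [hτ p _ m1, hτ q _ m2]
    exact (σ _).2.2 p q m1 m2 hd
  have key : ∀ p, ∀ z ∈ supp (τ p), Adj (τ p) (τ z) := by
    intro p z hz
    obtain ⟨n, hn⟩ := exists_nat_gt (dist p z / δ)
    have hn0 : (0 : ℝ) < n := lt_of_le_of_lt (by positivity) hn
    let w : ℕ → Pt := fun i => p + ((i : ℝ) / n) • (z - p)
    have hw : ∀ i ≤ n, w i ∈ supp (τ p) := by
      intro i hi
      refine (hconv (τ p)).add_smul_sub_mem (t1 p) hz ⟨by positivity, ?_⟩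
      rw [div_le_one hn0]; exact_mod_cast hi
    have hwd : ∀ i, dist (w i) (w (i + 1)) ≤ δ := by
      intro i
      have : w i - w (i + 1) = -((1 / (n : ℝ)) • (z - p)) := by
        simp only [w]; push_cast; rw [add_div, add_smul]; abel
      rw [dist_eq_norm, this, norm_neg, norm_smul, ← dist_eq_norm, dist_comm z p, Real.norm_eq_abs,
        abs_of_pos (by positivity), one_div, inv_mul_eq_div, div_le_iff₀ hn0]
      have := (div_lt_iff₀ hδ).1 hn
      linarith
    have hi : ∀ i ≤ n, Adj (τ p) (τ (w i)) := by
      intro i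
      induction i with
      | zero => intro _; simp only [w]; simpa using hrefl _
      | succ i ih =>
        intro hi
        exact H2 (τ (w i)) _ _ (hsymm _ _ (ih (by omega))) (t2 _ _ (hwd i)) _ (hw _ hi) _
          (t1 _) (by simpa using hδ.le)
    have := hi n le_rfl
    simp only [w] at this
    rwa [div_self hn0.ne', one_smul, add_sub_cancel] at this
  refine ⟨Set.range τ, fun p => ⟨_, ⟨p, rfl⟩, t1 p⟩, ?_⟩
  rintro _ ⟨p, rfl⟩ _ ⟨q, rfl⟩ ⟨z, hz1, hz2⟩
  exact H2 (τ z) _ _ (hsymm _ _ (key p z hz1)) (hsymm _ _ (key q z hz2)) z hz1 z hz2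
    (by simpa using hδ.le)

/-! ### Part C: geometry of rhombus tiles -/

theorem segment_eq_endpoint {a b c d : Pt} (h : segment ℝ a b = segment ℝ c d) :
    a = c ∨ a = d := by
  have ha : a ∈ segment ℝ c d := h ▸ left_mem_segment ℝ a b
  have hc : c ∈ segment ℝ a b := h ▸ left_mem_segment ℝ c d
  have hd : d ∈ segment ℝ a b := h ▸ right_mem_segment ℝ c d
  rw [segment_eq_image'] at ha hc hd
  obtain ⟨s, ⟨hs0, hs1⟩, hs⟩ := ha
  obtain ⟨t, ⟨ht0, ht1⟩, ht⟩ := hc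
  obtain ⟨r, ⟨hr0, hr1⟩, hr⟩ := hd
  simp only at hs ht hr
  have e : ((1 - s) * t + s * r) • (b - a) = 0 := by
    have : ((1 - s) * t + s * r) • (b - a) =
      ((1 - s) • (a + t • (b - a)) + s • (a + r • (b - a))) - a := by module
    rw [this, ht, hr]
    have : (1 - s) • c + s • d = c + s • (d - c) := by module
    rw [this, hs, sub_self]
  rcases smul_eq_zero.1 e with e | e
  · have h1 : 0 ≤ (1 - s) * t := mul_nonneg (by linarith) ht0
    have h2 : 0 ≤ s * r := mul_nonneg hs0 hr0
    have h3 : (1 - s) * t = 0 := by linarith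
    rcases mul_eq_zero.1 h3 with h3 | h3
    · right
      have : s = 1 := by linarith
      rw [← hs, this]; simp
    · left
      rw [← ht, h3]; simp
  · left
    rw [← ht, e]; simp

theorem Rhombus.edge_spec (r : Rhombus) (i : Fin 4) :
    ∃ a ∈ r.vertices, ∃ b ∈ r.vertices, r.edge i = segment ℝ a b := by
  fin_cases i
  · exact ⟨r.pos, by simp [vertices], r.pos + r.u, by simp [vertices], rfl⟩
  · exact ⟨r.pos + r.u, by simp [vertices], r.pos + r.u + r.v, by simp [vertices], rfl⟩
  · exact ⟨r.pos + r.u + r.v, by simp [vertices], r.pos + r.v, by simp [vertices], rfl⟩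
  · exact ⟨r.pos + r.v, by simp [vertices], r.pos, by simp [vertices], rfl⟩

theorem Rhombus.vertices_subset (r : Rhombus) : r.vertices ⊆ r.support := by
  intro p hp
  simp only [vertices, Set.mem_insert_iff, Set.mem_singleton_iff] at hp
  rcases hp with rfl | rfl | rfl | rfl
  · exact ⟨0, 0, by simp, by simp, by simp⟩
  · exact ⟨1, 0, by simp, by simp, by simp⟩
  · exact ⟨0, 1, by simp, by simp, by simp⟩
  · exact ⟨1, 1, by simp, by simp, by simp⟩

theorem Rhombus.convex_support (r : Rhombus) : Convex ℝ r.support := by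
  rintro x ⟨s, t, hs, ht, rfl⟩ y ⟨s', t', hs', ht', rfl⟩ a b ha hb hab
  refine ⟨a * s + b * s', a * t + b * t', ?_, ?_, ?_⟩
  · exact convex_Icc (0 : ℝ) 1 hs hs' ha hb hab
  · exact convex_Icc (0 : ℝ) 1 ht ht' ha hb hab
  · obtain rfl : b = 1 - a := by linarith
    module

theorem Rhombus.isCompact_support (r : Rhombus) : IsCompact r.support := by
  have : r.support = (fun p : ℝ × ℝ => r.pos + p.1 • r.u + p.2 • r.v) ''
      (Icc (0 : ℝ) 1 ×ˢ Icc (0 : ℝ) 1) := by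
    ext x
    constructor
    · rintro ⟨s, t, hs, ht, rfl⟩
      exact ⟨(s, t), ⟨hs, ht⟩, rfl⟩
    · rintro ⟨⟨s, t⟩, ⟨hs, ht⟩, rfl⟩
      exact ⟨s, t, hs, ht, rfl⟩
  rw [this]
  exact (isCompact_Icc.prod isCompact_Icc).image (by fun_prop)

theorem Rhombus.edge_subset (r : Rhombus) (i : Fin 4) : r.edge i ⊆ r.support := by
  obtain ⟨a, ha, b, hb, h⟩ := r.edge_spec i
  rw [h]
  exact r.convex_support.segment_subset (r.vertices_subset ha) (r.vertices_subset hb)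

theorem Rhombus.dist_le (r : Rhombus) {p : Pt} (hp : p ∈ r.support) :
    dist p r.pos ≤ ‖r.u‖ + ‖r.v‖ := by
  obtain ⟨s, t, ⟨hs0, hs1⟩, ⟨ht0, ht1⟩, rfl⟩ := hp
  have : r.pos + s • r.u + t • r.v - r.pos = s • r.u + t • r.v := by abel
  rw [dist_eq_norm, this]
  refine (norm_add_le _ _).trans (add_le_add ?_ ?_)
  · rw [norm_smul, Real.norm_eq_abs, abs_of_nonneg hs0]
    exact mul_le_of_le_one_left (norm_nonneg _) hs1
  · rw [norm_smul, Real.norm_eq_abs, abs_of_nonneg ht0]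
    exact mul_le_of_le_one_left (norm_nonneg _) ht1

/-- Two tiles share a vertex. -/
def VAdj (r s : Rhombus) : Prop := ∃ p ∈ r.vertices, p ∈ s.vertices

theorem VAdj.symm {r s : Rhombus} (h : VAdj r s) : VAdj s r := by
  obtain ⟨p, h1, h2⟩ := h; exact ⟨p, h2, h1⟩

theorem VAdj.refl (r : Rhombus) : VAdj r r := ⟨r.pos, by simp [Rhombus.vertices],
  by simp [Rhombus.vertices]⟩

theorem vadj_of_edge_eq {r s : Rhombus} {i j : Fin 4} (h : r.edge i = s.edge j) : VAdj r s := by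
  obtain ⟨a, ha, b, hb, h1⟩ := r.edge_spec i
  obtain ⟨c, hc, d, hd, h2⟩ := s.edge_spec j
  rw [h1, h2] at h
  rcases segment_eq_endpoint h with rfl | rfl
  · exact ⟨a, ha, hc⟩
  · exact ⟨a, ha, hd⟩

theorem vadj_of_e2e {r s : Rhombus} (h : EdgeToEdgePair r s)
    (hne : (r.support ∩ s.support).Nonempty) : VAdj r s := by
  rcases h with h | ⟨p, h1, h2, -⟩ | ⟨e, ⟨i, rfl⟩, ⟨j, hj⟩, -⟩
  · rw [h] at hne; exact absurd hne Set.not_nonempty_empty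
  · exact ⟨p, h1, h2⟩
  · exact vadj_of_edge_eq hj.symm

/-! Translations -/

theorem Rhombus.support_translate (r : Rhombus) (w : Pt) :
    (r.translate w).support = (fun x => w + x) '' r.support := by
  ext x
  constructor
  · rintro ⟨s, t, hs, ht, rfl⟩
    refine ⟨_, ⟨s, t, hs, ht, rfl⟩, ?_⟩
    simp only [translate]; abel
  · rintro ⟨_, ⟨s, t, hs, ht, rfl⟩, rfl⟩
    refine ⟨s, t, hs, ht, ?_⟩
    simp only [translate]; abel

theorem Rhombus.vertices_translate (r : Rhombus) (w : Pt) :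
    (r.translate w).vertices = (fun x => w + x) '' r.vertices := by
  simp only [vertices, translate, Set.image_insert_eq, Set.image_singleton]
  congr 1
  · abel
  congr 1
  · abel
  congr 1
  · abel
  congr 1
  abel

theorem Rhombus.edge_translate (r : Rhombus) (w : Pt) (i : Fin 4) :
    (r.translate w).edge i = (fun x => w + x) '' r.edge i := by
  fin_cases i
  all_goals
    simp only [edge, translate, Fin.zero_eta, Fin.mk_one, Fin.reduceFinMk, Matrix.cons_val]
    rw [segment_translate_image]
    congr 1 <;> abel

theorem e2e_translate {r s : Rhombus} (w : Pt) (h : EdgeToEdgePair r s) :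
    EdgeToEdgePair (r.translate w) (s.translate w) := by
  have hi : (r.translate w).support ∩ (s.translate w).support =
      (fun x => w + x) '' (r.support ∩ s.support) := by
    rw [r.support_translate, s.support_translate, Set.image_inter (add_right_injective w)]
  unfold EdgeToEdgePair
  rw [hi]
  rcases h with h | ⟨p, h1, h2, h3⟩ | ⟨e, ⟨i, rfl⟩, ⟨j, hj⟩, h3⟩
  · left; rw [h, Set.image_empty]
  · right; left
    refine ⟨w + p, ?_, ?_, by rw [h3, Set.image_singleton]⟩
    · rw [r.vertices_translate]; exact ⟨p, h1, rfl⟩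
    · rw [s.vertices_translate]; exact ⟨p, h2, rfl⟩
  · right; right
    exact ⟨_, ⟨i, r.edge_translate w i⟩, ⟨j, by rw [s.edge_translate, hj]⟩, by rw [h3]⟩

/-- The tile of shape number `i` placed at `w`. -/
def tl {k : ℕ} (shapes : Fin k → Rhombus) (i : Fin k) (w : Pt) : Rhombus :=
  ⟨w, (shapes i).u, (shapes i).v⟩

section
variable {k : ℕ} (shapes : Fin k → Rhombus)

theorem tl_translate (i : Fin k) (a w : Pt) :
    (tl shapes i a).translate w = tl shapes i (a + w) := rfl

theorem tl_e2e_iff (i j : Fin k) (a b w : Pt) :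
    EdgeToEdgePair (tl shapes i (a + w)) (tl shapes j (b + w)) ↔
      EdgeToEdgePair (tl shapes i a) (tl shapes j b) := by
  refine ⟨fun h => ?_, fun h => by
    rw [← tl_translate shapes i a w, ← tl_translate shapes j b w]
    exact e2e_translate w h⟩
  have := e2e_translate (-w) h
  simpa only [tl_translate, add_neg_cancel_right] using this

theorem tl_mem_support (i : Fin k) (a w x : Pt) :
    x + w ∈ (tl shapes i (a + w)).support ↔ x ∈ (tl shapes i a).support := by
  rw [← tl_translate, Rhombus.support_translate, add_comm x w]
  constructor
  · rintro ⟨y, hy, h⟩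
    exact add_left_cancel h ▸ hy
  · intro h
    exact ⟨x, h, rfl⟩

theorem tl_vadj_iff (i j : Fin k) (a b w : Pt) :
    VAdj (tl shapes i (a + w)) (tl shapes j (b + w)) ↔
      VAdj (tl shapes i a) (tl shapes j b) := by
  rw [← tl_translate, ← tl_translate, VAdj, Rhombus.vertices_translate,
    Rhombus.vertices_translate]
  constructor
  · rintro ⟨_, ⟨p, hp, rfl⟩, ⟨q, hq, h⟩⟩
    have : q = p := add_left_cancel h
    exact ⟨p, hp, this ▸ hq⟩
  · rintro ⟨p, hp, hq⟩
    exact ⟨_, ⟨p, hp, rfl⟩, ⟨p, hq, rfl⟩⟩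

theorem tl_edge_iff (i j : Fin k) (a b w : Pt) (e f : Fin 4) :
    (tl shapes i (a + w)).edge e = (tl shapes j (b + w)).edge f ↔
      (tl shapes i a).edge e = (tl shapes j b).edge f := by
  rw [← tl_translate, ← tl_translate, Rhombus.edge_translate, Rhombus.edge_translate]
  exact (Set.image_injective.2 (add_right_injective w)).eq_iff

theorem tl_eq_iff (i j : Fin k) (a b w : Pt) :
    tl shapes i (a + w) = tl shapes j (b + w) ↔ tl shapes i a = tl shapes j b := by
  simp [tl]

/-- Vertices of a shape relative to its position. -/
def Vs (i : Fin k) : Set Pt :=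
  {0, (shapes i).u, (shapes i).v, (shapes i).u + (shapes i).v}

theorem Vs_finite (i : Fin k) : (Vs shapes i).Finite := by
  simp [Vs]

theorem mem_tl_vertices (i : Fin k) (w p : Pt) :
    p ∈ (tl shapes i w).vertices ↔ ∃ α ∈ Vs shapes i, p = w + α := by
  simp [Vs, tl, Rhombus.vertices, add_assoc]

/-- Differences of vertices. -/
def Ds (i j : Fin k) : Set Pt := Set.image2 (fun α β => α - β) (Vs shapes i) (Vs shapes j)

theorem Ds_finite (i j : Fin k) : (Ds shapes i j).Finite :=
  (Vs_finite shapes i).image2 _ (Vs_finite shapes j)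

theorem vadj_diff {i j : Fin k} {a b : Pt} (h : VAdj (tl shapes i a) (tl shapes j b)) :
    b - a ∈ Ds shapes i j := by
  obtain ⟨p, h1, h2⟩ := h
  obtain ⟨α, hα, rfl⟩ := (mem_tl_vertices _ _ _ _).1 h1
  obtain ⟨β, hβ, h⟩ := (mem_tl_vertices _ _ _ _).1 h2
  refine ⟨α, hα, β, hβ, ?_⟩
  simp only
  rw [sub_eq_sub_iff_add_eq_add, add_comm α a, h]

/-- The group generated by the edge vectors and positions is a copy of `ℤ^m`. -/
theorem exists_lattice : ∃ (m : ℕ) (φ : Posn m →+ Pt), Function.Injective φ ∧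
    ∀ i, (shapes i).u ∈ φ.range ∧ (shapes i).v ∈ φ.range ∧ (shapes i).pos ∈ φ.range := by
  let S : Set Pt := Set.range (fun i => (shapes i).u) ∪ Set.range (fun i => (shapes i).v) ∪
    Set.range (fun i => (shapes i).pos)
  have hS : S.Finite := ((Set.finite_range _).union (Set.finite_range _)).union
    (Set.finite_range _)
  let H : Submodule ℤ Pt := Submodule.span ℤ S
  have : Module.Finite ℤ H := Module.Finite.iff_fg.2 ⟨hS.toFinset, by simp [H]⟩
  have : IsAddTorsionFree Pt := IsAddTorsionFree.of_module_rat Pt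
  have : Module.Free ℤ H := inferInstance
  let b := Module.finBasis ℤ H
  let e := b.equivFun
  refine ⟨Module.finrank ℤ H, (H.subtype.comp e.symm.toLinearMap).toAddMonoidHom, ?_, ?_⟩
  · exact Subtype.val_injective.comp e.symm.injective
  · have hr : ∀ x ∈ S, x ∈ (H.subtype.comp e.symm.toLinearMap).toAddMonoidHom.range := by
      intro x hx
      exact ⟨e ⟨x, Submodule.subset_span hx⟩, by simp⟩
    intro i
    exact ⟨hr _ (Or.inl (Or.inl ⟨i, rfl⟩)), hr _ (Or.inl (Or.inr ⟨i, rfl⟩)), hr _ (Or.inr ⟨i, rfl⟩)⟩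

theorem exists_inter (i : Fin k) (hval : (shapes i).IsValid) :
    ∃ c > 0, ∀ a b : Pt, dist a b < c →
      ((tl shapes i a).support ∩ (tl shapes i b).support).Nonempty := by
  let B := basisOfLinearIndependentOfCardEqFinrank hval.1 (by simp)
  have hB0 : B 0 = (shapes i).u := by simp [B]
  have hB1 : B 1 = (shapes i).v := by simp [B]
  have hcont : ∀ l, Continuous (fun d : Pt => B.repr d l) := fun l =>
    (B.coord l).continuous_of_finiteDimensional
  have hev : ∀ᶠ d in nhds (0 : Pt), ∀ l, |B.repr d l| < 1 := by
    rw [Filter.eventually_all]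
    intro l
    have : Filter.Tendsto (fun d : Pt => |B.repr d l|) (nhds 0) (nhds |B.repr 0 l|) :=
      (hcont l).abs.tendsto 0
    simp only [map_zero, Finsupp.coe_zero, Pi.zero_apply, abs_zero] at this
    exact this.eventually_lt_const one_pos
  obtain ⟨c, hc, h⟩ := Metric.eventually_nhds_iff.1 hev
  refine ⟨c, hc, fun a b hab => ?_⟩
  have hd := h (y := b - a) (by rwa [dist_zero_right, ← dist_eq_norm, dist_comm])
  have h0 := abs_lt.1 (hd 0)
  have h1 := abs_lt.1 (hd 1)
  have hsum : b - a = B.repr (b - a) 0 • (shapes i).u + B.repr (b - a) 1 • (shapes i).v := by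
    conv_lhs => rw [← B.sum_repr (b - a)]
    rw [Fin.sum_univ_two, hB0, hB1]
  set α := B.repr (b - a) 0
  set β := B.repr (b - a) 1
  have hb : b = a + α • (shapes i).u + β • (shapes i).v := by
    rw [add_assoc, ← hsum]; abel
  refine ⟨a + (max α 0) • (shapes i).u + (max β 0) • (shapes i).v,
    ⟨max α 0, max β 0, ⟨le_max_right _ _, max_le h0.2.le zero_le_one⟩,
      ⟨le_max_right _ _, max_le h1.2.le zero_le_one⟩, rfl⟩,
    ⟨max α 0 - α, max β 0 - β, ⟨by simp, ?_⟩, ⟨by simp, ?_⟩, ?_⟩⟩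
  · rcases max_cases α 0 with ⟨h, _⟩ | ⟨h, _⟩ <;> rw [h] <;> linarith
  · rcases max_cases β 0 with ⟨h, _⟩ | ⟨h, _⟩ <;> rw [h] <;> linarith
  · simp only [tl]
    rw [hb]
    module

theorem exists_sep (i : Fin k) (hval : (shapes i).IsValid) :
    ∃ c > 0, ∀ a b : Pt, a ≠ b → dist a b < c →
      ¬ EdgeToEdgePair (tl shapes i a) (tl shapes i b) := by
  obtain ⟨c, hc, h⟩ := exists_inter shapes i hval
  have hfin : (Ds shapes i i \ {0}).Finite := (Ds_finite shapes i i).subset Set.sdiff_subset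
  have hev : ∀ᶠ c' in nhdsWithin (0 : ℝ) (Ioi 0), ∀ z ∈ Ds shapes i i \ {0}, c' < ‖z‖ := by
    rw [Filter.eventually_all_finite hfin]
    intro z hz
    have : 0 < ‖z‖ := norm_pos_iff.2 (by simpa using hz.2)
    exact (eventually_lt_nhds this).filter_mono nhdsWithin_le_nhds
  obtain ⟨c', hc', hpos⟩ := (hev.and self_mem_nhdsWithin).exists
  refine ⟨min c c', lt_min hc hpos, fun a b hab hd he => ?_⟩
  have hz := vadj_diff shapes (vadj_of_e2e he (h a b (hd.trans_le (min_le_left _ _))))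
  have := hc' _ ⟨hz, by simpa [sub_eq_zero] using hab.symm⟩
  rw [← dist_eq_norm, dist_comm] at this
  exact absurd (hd.trans_le (min_le_right _ _)) (not_lt.2 this.le)

theorem finite_of_sep {S : Set Pt} {c R : ℝ} {p : Pt} (hc : 0 < c) (hS : S ⊆ closedBall p R)
    (hsep : ∀ a ∈ S, ∀ b ∈ S, a ≠ b → c ≤ dist a b) : S.Finite := by
  obtain ⟨t, -, htf, ht⟩ := (isCompact_closedBall p R).finite_cover_balls (half_pos hc)
  have hex : ∀ a ∈ S, ∃ y ∈ t, a ∈ ball y (c / 2) := fun a ha => by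
    simpa using ht (hS ha)
  choose! f hf using hex
  refine Set.Finite.of_injOn (f := f) (fun a ha => (hf a ha).1) ?_ htf
  intro a ha b hb hab
  by_contra hne
  have h1 := (hf a ha).2
  have h2 := (hf b hb).2
  rw [← hab] at h2
  rw [mem_ball] at h1 h2
  have := dist_triangle_right a b (f a)
  linarith [hsep a ha b hb hne]

theorem eq_tl {r : Rhombus} {i : Fin k} (h : r.SameShape (shapes i)) : r = tl shapes i r.pos := by
  obtain ⟨p, u, v⟩ := r
  obtain ⟨h1, h2⟩ := h
  simp only at h1 h2
  simp [tl, h1, h2]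

theorem locally_finite (hval : ∀ i, (shapes i).IsValid) {x : Set Rhombus}
    (hx : IsTilingOn (Set.range shapes) x) (p : Pt) (R : ℝ) :
    {s ∈ x | (s.support ∩ closedBall p R).Nonempty}.Finite := by
  have hfin : (⋃ i, (tl shapes i) '' {a | tl shapes i a ∈ x ∧
      a ∈ closedBall p (R + (‖(shapes i).u‖ + ‖(shapes i).v‖))}).Finite := by
    refine Set.finite_iUnion fun i => Set.Finite.image _ ?_
    obtain ⟨c, hc, h⟩ := exists_sep shapes i (hval i)
    refine finite_of_sep hc (fun a ha => ha.2) fun a ha b hb hab => ?_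
    by_contra hlt
    refine h a b hab (not_le.1 hlt) (hx.1.2.2 _ ha.1 _ hb.1 ?_)
    simpa [tl] using hab
  refine hfin.subset ?_
  rintro s ⟨hs, q, hq, hqb⟩
  obtain ⟨_, ⟨i, rfl⟩, hi⟩ := hx.2 s hs
  have e := eq_tl shapes hi
  refine Set.mem_iUnion.2 ⟨i, s.pos, ⟨e ▸ hs, ?_⟩, e.symm⟩
  have h1 := s.dist_le hq
  rw [hi.1, hi.2] at h1
  rw [mem_closedBall] at hqb ⊢
  have := dist_triangle_left s.pos p q
  linarith

theorem corona_cover (hval : ∀ i, (shapes i).IsValid) {x : Set Rhombus}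
    (hx : IsTilingOn (Set.range shapes) x) {t : Rhombus} (ht : t ∈ x) :
    ∃ ε > 0, ∀ p ∈ t.support, ∀ q, dist q p ≤ ε → ∃ s ∈ x, VAdj t s ∧ q ∈ s.support := by
  let R := ‖t.u‖ + ‖t.v‖ + 1
  let Y : Set Rhombus := {s ∈ {s ∈ x | (s.support ∩ closedBall t.pos R).Nonempty} | ¬ VAdj t s}
  have hY : Y.Finite := (locally_finite shapes hval hx t.pos R).subset (Set.sep_subset _ _)
  have hcl : IsClosed (⋃ s ∈ Y, s.support) :=
    hY.isClosed_biUnion fun s _ => s.isCompact_support.isClosed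
  have hdisj : Disjoint t.support (⋃ s ∈ Y, s.support) := by
    rw [Set.disjoint_left]
    intro p hp hp'
    obtain ⟨s, hs, hps⟩ := Set.mem_iUnion₂.1 hp'
    refine hs.2 ?_
    by_cases hts : t = s
    · rw [hts]; exact VAdj.refl s
    · exact vadj_of_e2e (hx.1.2.2 t ht s hs.1.1 hts) ⟨p, hp, hps⟩
  obtain ⟨δ, hδ, hd⟩ := hdisj.exists_thickenings t.isCompact_support hcl
  refine ⟨min (δ / 2) 1, by positivity, fun p hp q hq => ?_⟩
  have hqu : q ∈ ⋃ r ∈ x, r.support := by rw [hx.1.2.1]; trivial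
  obtain ⟨s, hs, hqs⟩ := Set.mem_iUnion₂.1 hqu
  refine ⟨s, hs, ?_, hqs⟩
  by_contra hadj
  have hsY : s ∈ Y := by
    refine ⟨⟨hs, q, hqs, ?_⟩, hadj⟩
    have h1 := t.dist_le hp
    have h2 := dist_triangle q p t.pos
    have h3 := hq.trans (min_le_right _ _)
    rw [mem_closedBall]
    simp only [R]
    linarith
  have g1 : q ∈ thickening δ t.support := by
    rw [mem_thickening_iff]
    exact ⟨p, hp, lt_of_le_of_lt (hq.trans (min_le_left _ _)) (by linarith)⟩
  have g2 : q ∈ thickening δ (⋃ s ∈ Y, s.support) :=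
    self_subset_thickening hδ _ (Set.mem_iUnion₂.2 ⟨s, hsY, hqs⟩)
  exact Set.disjoint_left.1 hd g1 g2

end
/-! ### Part D: conditions given by computable families of clauses -/

/-- The condition `P a v` is equivalent to a computable family of clauses. -/
def ClauseAx {α V : Type} [Primcodable α] [Primcodable V] (P : α → Set V → Prop) : Prop :=
  ∃ (J : Type) (_ : Primcodable J) (cl : α → J → List V × List V), Computable₂ cl ∧
    ∀ a v, P a v ↔ ∀ j, SatClause v (cl a j)

section
variable {α V J : Type} [Primcodable α] [Primcodable V] [Primcodable J]

theorem ClauseAx.and {P Q : α → Set V → Prop} (hP : ClauseAx P) (hQ : ClauseAx Q) :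
    ClauseAx (fun a v => P a v ∧ Q a v) := by
  obtain ⟨J, _, c, hc, h⟩ := hP
  obtain ⟨J', _, c', hc', h'⟩ := hQ
  refine ⟨J ⊕ J', inferInstance, fun a s => Sum.casesOn s (c a) (c' a), ?_, ?_⟩
  · have h1 : Computable₂ (fun (p : α × (J ⊕ J')) (j : J) => c p.1 j) :=
      hc.comp (Computable.fst.comp Computable.fst) Computable.snd
    have h2 : Computable₂ (fun (p : α × (J ⊕ J')) (j : J') => c' p.1 j) :=
      hc'.comp (Computable.fst.comp Computable.fst) Computable.snd
    exact Computable.sumCasesOn Computable.snd h1 h2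
  · intro a v
    change (P a v ∧ Q a v) ↔ _
    rw [h, h']
    constructor
    · rintro ⟨h1, h2⟩ (j | j)
      · exact h1 j
      · exact h2 j
    · intro h
      exact ⟨fun j => h (Sum.inl j), fun j => h (Sum.inr j)⟩

theorem ClauseAx.of_cond (x0 : V) (R : α × J → Bool) (hR : Computable R)
    (cl : α × J → List V × List V) (hcl : Computable cl) :
    ClauseAx (fun a v => ∀ j, R (a, j) = true → SatClause v (cl (a, j))) := by
  refine ⟨J, inferInstance, fun a j => cond (R (a, j)) (cl (a, j)) ([x0], [x0]), ?_, ?_⟩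
  · exact (Computable.cond hR hcl (Computable.const _)).of_eq fun p => rfl
  · intro a v
    refine forall_congr' fun j => ?_
    cases hRj : R (a, j)
    · simp [SatClause, hRj]
    · simp [hRj]

theorem ClauseAx.congr {P Q : α → Set V → Prop} (hP : ClauseAx P) (h : ∀ a v, P a v ↔ Q a v) :
    ClauseAx Q := by
  obtain ⟨J, i, c, hc, hh⟩ := hP
  exact ⟨J, i, c, hc, fun a v => (h a v).symm.trans (hh a v)⟩

theorem ClauseAx.pi01 {P : α → Set V → Prop} (hP : ClauseAx P) (A : α → Prop)
    (h : ∀ a, A a ↔ ∃ v, P a v) : Pi01 A := by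
  obtain ⟨J, i, c, hc, hh⟩ := hP
  refine pi01_of_clauses A c hc fun a => ?_
  rw [h a]
  exact exists_congr fun v => hh a v

end

/-- The set of variables: symbolic tiles placed at lattice positions. -/
abbrev TVar (k m : ℕ) : Type := SymbTile k × Posn m

section
variable {k m : ℕ}

def AxRoot (T : List (SymbTile k)) (v : Set (TVar k m)) : Prop := ∃ p ∈ T, (p, 0) ∈ v

def AxIn (T : List (SymbTile k)) (v : Set (TVar k m)) : Prop := ∀ a ∈ v, a.1 ∈ T

def AxGeo (Bad : Set (Fin k × (Fin k × Posn m) × (Fin k × Posn m)))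
    (v : Set (TVar k m)) : Prop :=
  ∀ (p q r : SymbTile k) (g d d' : Posn m), (p.1, (q.1, d), (r.1, d')) ∈ Bad →
    (p, g) ∈ v → (q, g + d) ∈ v → (r, g + d') ∈ v → False

def AxCol (ET : Set ((Fin 4 × Fin 4) × (Fin k × Fin k) × Posn m))
    (v : Set (TVar k m)) : Prop :=
  ∀ (p q : SymbTile k) (g d : Posn m) (e f : Fin 4), ((e, f), (p.1, q.1), d) ∈ ET →
    (p, g) ∈ v → (q, g + d) ∈ v → SymbTile.colors p e = SymbTile.colors q f

def AxCover (CT : Set (Fin k × List (Fin k × Posn m)))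
    (T : List (SymbTile k)) (v : Set (TVar k m)) : Prop :=
  ∀ (p : SymbTile k) (g : Posn m) (M : List (Fin k × Posn m)), (p.1, M) ∈ CT → (p, g) ∈ v →
    ∃ z ∈ M, ∃ q ∈ T, q.1 = z.1 ∧ (q, g + z.2) ∈ v

/-- Lattice position of a displacement code. -/
def normDisp (aU aV : Fin k → Posn m) (d : Disp k) : Posn m :=
  d.foldr (fun e s => (e.2.1 • aU e.1 + e.2.2 • aV e.1) + s) 0

def AxForb (F : ℕ → PatternCode k) (canon : Fin k → Fin k) (aU aV aP : Fin k → Posn m)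
    (v : Set (TVar k m)) : Prop :=
  ∀ (n : ℕ) (w : Posn m) (L : List (TVar k m)),
    L.map (fun a => (canon a.1.1, a.2)) =
      (F n).map (fun e => (canon e.1, w + (aP e.1 + normDisp aU aV e.2))) →
    (∀ a ∈ L, a ∈ v) → False

theorem axRoot_ax : ClauseAx (AxRoot (k := k) (m := m)) := by
  refine ⟨Unit, inferInstance, fun T _ => ([], T.map (fun p => (p, 0))), ?_, ?_⟩
  · have h : Primrec (fun x : List (SymbTile k) × Unit =>
        (([] : List (TVar k m)), x.1.map (fun p => ((p, 0) : TVar k m)))) :=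
      Primrec.pair (Primrec.const _) (Primrec.list_map Primrec.fst
        (Primrec.pair Primrec.snd (Primrec.const _)).to₂)
    exact h.to_comp
  · intro T v
    simp [SatClause, AxRoot]

theorem mem_list_primrec {β : Type} [Primcodable β] [DecidableEq β] :
    PrimrecRel (fun (b : β) (l : List β) => b ∈ l) := by
  have h : PrimrecRel (fun (l : List β) (b : β) => ∃ c ∈ l, c = b) :=
    (Primrec.eq (α := β)).exists_mem_list
  exact (h.comp Primrec.snd Primrec.fst).of_eq fun x => by simp

theorem axIn_ax (x0 : TVar k m) :
    ClauseAx (AxIn (k := k) (m := m)) := by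
  refine (ClauseAx.of_cond (α := List (SymbTile k)) (J := TVar k m) x0
    (fun x => decide (¬ x.2.1 ∈ x.1)) ?_
    (fun x => ([x.2], [])) ?_).congr ?_
  · have h : PrimrecPred (fun x : List (SymbTile k) × TVar k m => ¬ x.2.1 ∈ x.1) :=
      (mem_list_primrec.comp (Primrec.fst.comp Primrec.snd) Primrec.fst).not
    exact h.decide.to_comp
  · have h : Primrec (fun x : List (SymbTile k) × TVar k m =>
        ([x.2], ([] : List (TVar k m)))) :=
      Primrec.pair (Primrec.list_cons.comp Primrec.snd (Primrec.const [])) (Primrec.const [])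
    exact h.to_comp
  · intro T v
    simp only [SatClause, AxIn, decide_eq_true_eq]
    refine forall_congr' fun a => ?_
    simp only [List.mem_singleton, forall_eq, List.not_mem_nil, false_and, exists_false, imp_false]
    tauto

theorem axGeo_ax (x0 : TVar k m) {Bad : Set (Fin k × (Fin k × Posn m) × (Fin k × Posn m))}
    (hB : Bad.Finite) :
    ClauseAx (fun (_ : List (SymbTile k)) v => AxGeo Bad v) := by
  classical
  refine (ClauseAx.of_cond (α := List (SymbTile k))
    (J := (TVar k m) × (TVar k m) × (TVar k m)) x0
    (fun x => decide ((x.2.1.1.1, (x.2.2.1.1.1, x.2.2.1.2), (x.2.2.2.1.1, x.2.2.2.2)) ∈ Bad)) ?_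
    (fun x => ([x.2.1, (x.2.2.1.1, x.2.1.2 + x.2.2.1.2), (x.2.2.2.1, x.2.1.2 + x.2.2.2.2)], []))
    ?_).congr ?_
  · have a : Primrec (fun x : List (SymbTile k) × (TVar k m) × (TVar k m) × (TVar k m) =>
        x.2.1) := Primrec.fst.comp Primrec.snd
    have b : Primrec (fun x : List (SymbTile k) × (TVar k m) × (TVar k m) × (TVar k m) =>
        x.2.2.1) := Primrec.fst.comp (Primrec.snd.comp Primrec.snd)
    have c : Primrec (fun x : List (SymbTile k) × (TVar k m) × (TVar k m) × (TVar k m) =>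
        x.2.2.2) := Primrec.snd.comp (Primrec.snd.comp Primrec.snd)
    have h := (primrecPred_of_finite hB).comp
      (Primrec.pair (Primrec.fst.comp (Primrec.fst.comp a))
        (Primrec.pair (Primrec.pair (Primrec.fst.comp (Primrec.fst.comp b)) (Primrec.snd.comp b))
          (Primrec.pair (Primrec.fst.comp (Primrec.fst.comp c)) (Primrec.snd.comp c))))
    exact h.decide.to_comp
  · have a : Primrec (fun x : List (SymbTile k) × (TVar k m) × (TVar k m) × (TVar k m) =>
        x.2.1) := Primrec.fst.comp Primrec.snd
    have b : Primrec (fun x : List (SymbTile k) × (TVar k m) × (TVar k m) × (TVar k m) =>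
        x.2.2.1) := Primrec.fst.comp (Primrec.snd.comp Primrec.snd)
    have c : Primrec (fun x : List (SymbTile k) × (TVar k m) × (TVar k m) × (TVar k m) =>
        x.2.2.2) := Primrec.snd.comp (Primrec.snd.comp Primrec.snd)
    have b' := Primrec.pair (Primrec.fst.comp b)
      ((posn_primrec_add m).comp (Primrec.snd.comp a) (Primrec.snd.comp b))
    have c' := Primrec.pair (Primrec.fst.comp c)
      ((posn_primrec_add m).comp (Primrec.snd.comp a) (Primrec.snd.comp c))
    have h := Primrec.pair (Primrec.list_cons.comp a (Primrec.list_cons.comp b'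
      (Primrec.list_cons.comp c' (Primrec.const []))))
      (Primrec.const ([] : List (TVar k m)))
    exact h.to_comp
  · intro T v
    simp only [SatClause, AxGeo, decide_eq_true_eq]
    constructor
    · intro h p q r g d d' hb h1 h2 h3
      obtain ⟨_, h4, _⟩ := h ((p, g), (q, d), (r, d')) hb (by simp [h1, h2, h3])
      simp at h4
    · rintro h ⟨⟨p, g⟩, ⟨q, d⟩, ⟨r, d'⟩⟩ hb hv
      exact (h p q r g d d' hb (hv _ (by simp)) (hv _ (by simp)) (hv _ (by simp))).elim

theorem colors_primrec :
    Primrec (fun x : SymbTile k × Fin 4 => SymbTile.colors x.1 x.2) := by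
  have c : Primrec (fun x : SymbTile k × Fin 4 => x.1.2) := Primrec.snd.comp Primrec.fst
  have e : ∀ i : Fin 4, PrimrecPred (fun x : SymbTile k × Fin 4 => x.2 = i) := fun i =>
    Primrec.eq.comp Primrec.snd (Primrec.const i)
  have h := Primrec.ite (e 0) (Primrec.fst.comp c) (Primrec.ite (e 1)
    (Primrec.fst.comp (Primrec.snd.comp c)) (Primrec.ite (e 2)
    (Primrec.fst.comp (Primrec.snd.comp (Primrec.snd.comp c)))
    (Primrec.snd.comp (Primrec.snd.comp (Primrec.snd.comp c)))))
  refine h.of_eq ?_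
  rintro ⟨p, i⟩
  fin_cases i <;> rfl

theorem axCol_ax (x0 : TVar k m) {ET : Set ((Fin 4 × Fin 4) × (Fin k × Fin k) × Posn m)}
    (hE : ET.Finite) :
    ClauseAx (fun (_ : List (SymbTile k)) v => AxCol ET v) := by
  classical
  refine (ClauseAx.of_cond (α := List (SymbTile k))
    (J := (TVar k m) × (TVar k m) × (Fin 4 × Fin 4)) x0
    (fun x => decide (((x.2.2.2, (x.2.1.1.1, x.2.2.1.1.1), x.2.2.1.2) ∈ ET) ∧
      ¬ (SymbTile.colors x.2.1.1 x.2.2.2.1 = SymbTile.colors x.2.2.1.1 x.2.2.2.2))) ?_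
    (fun x => ([x.2.1, (x.2.2.1.1, x.2.1.2 + x.2.2.1.2)], []))
    ?_).congr ?_
  · have a : Primrec (fun x : List (SymbTile k) × (TVar k m) × (TVar k m) × (Fin 4 × Fin 4) =>
        x.2.1) := Primrec.fst.comp Primrec.snd
    have b : Primrec (fun x : List (SymbTile k) × (TVar k m) × (TVar k m) × (Fin 4 × Fin 4) =>
        x.2.2.1) := Primrec.fst.comp (Primrec.snd.comp Primrec.snd)
    have c : Primrec (fun x : List (SymbTile k) × (TVar k m) × (TVar k m) × (Fin 4 × Fin 4) =>
        x.2.2.2) := Primrec.snd.comp (Primrec.snd.comp Primrec.snd)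
    have h := (primrecPred_of_finite hE).comp
      (Primrec.pair c (Primrec.pair (Primrec.pair (Primrec.fst.comp (Primrec.fst.comp a))
        (Primrec.fst.comp (Primrec.fst.comp b))) (Primrec.snd.comp b)))
    have h1 := colors_primrec.comp (Primrec.pair (Primrec.fst.comp a) (Primrec.fst.comp c))
    have h2 := colors_primrec.comp (Primrec.pair (Primrec.fst.comp b) (Primrec.snd.comp c))
    have h3 := h.and (Primrec.eq.comp h1 h2).not
    exact h3.decide.to_comp
  · have a : Primrec (fun x : List (SymbTile k) × (TVar k m) × (TVar k m) × (Fin 4 × Fin 4) =>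
        x.2.1) := Primrec.fst.comp Primrec.snd
    have b : Primrec (fun x : List (SymbTile k) × (TVar k m) × (TVar k m) × (Fin 4 × Fin 4) =>
        x.2.2.1) := Primrec.fst.comp (Primrec.snd.comp Primrec.snd)
    have b' := Primrec.pair (Primrec.fst.comp b)
      ((posn_primrec_add m).comp (Primrec.snd.comp a) (Primrec.snd.comp b))
    have h := Primrec.pair (Primrec.list_cons.comp a (Primrec.list_cons.comp b'
      (Primrec.const []))) (Primrec.const ([] : List (TVar k m)))
    exact h.to_comp
  · intro T v
    simp only [SatClause, AxCol, decide_eq_true_eq]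
    constructor
    · intro h p q g d e f hb h1 h2
      by_contra hne
      obtain ⟨_, h4, _⟩ := h ((p, g), (q, d), (e, f)) ⟨hb, hne⟩ (by simp [h1, h2])
      simp at h4
    · rintro h ⟨⟨p, g⟩, ⟨q, d⟩, ⟨e, f⟩⟩ ⟨hb, hne⟩ hv
      exact (hne (h p q g d e f hb (hv _ (by simp)) (hv _ (by simp)))).elim

theorem axCover_ax (x0 : TVar k m) {CT : Set (Fin k × List (Fin k × Posn m))}
    (hC : CT.Finite) : ClauseAx (AxCover CT) := by
  classical
  refine (ClauseAx.of_cond (α := List (SymbTile k))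
    (J := (TVar k m) × List (Fin k × Posn m)) x0
    (fun x => decide ((x.2.1.1.1, x.2.2) ∈ CT)) ?_
    (fun x => ([x.2.1], x.2.2.flatMap (fun z => x.1.flatMap (fun q =>
      if q.1 = z.1 then [(q, x.2.1.2 + z.2)] else [])))) ?_).congr ?_
  · have h := (primrecPred_of_finite hC).comp (Primrec.pair
      (Primrec.fst.comp (Primrec.fst.comp (Primrec.fst.comp (Primrec.snd
        (α := List (SymbTile k)) (β := (TVar k m) × List (Fin k × Posn m))))))
      (Primrec.snd.comp Primrec.snd))
    exact h.decide.to_comp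
  · let X := List (SymbTile k) × (TVar k m) × List (Fin k × Posn m)
    have h0 : Primrec (fun x : (X × (Fin k × Posn m)) × SymbTile k =>
        if x.2.1 = x.1.2.1 then [(x.2, x.1.1.2.1.2 + x.1.2.2)] else []) := by
      have hz : Primrec (fun x : (X × (Fin k × Posn m)) × SymbTile k => x.1.2) :=
        Primrec.snd.comp Primrec.fst
      have hg : Primrec (fun x : (X × (Fin k × Posn m)) × SymbTile k => x.1.1.2.1.2) :=
        Primrec.snd.comp (Primrec.fst.comp (Primrec.snd.comp (Primrec.fst.comp Primrec.fst)))
      exact Primrec.ite (Primrec.eq.comp (Primrec.fst.comp Primrec.snd) (Primrec.fst.comp hz))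
        (Primrec.list_cons.comp (Primrec.pair Primrec.snd
          ((posn_primrec_add m).comp hg (Primrec.snd.comp hz))) (Primrec.const []))
        (Primrec.const [])
    have h1 : Primrec₂ (fun (x : X) (z : Fin k × Posn m) => x.1.flatMap (fun q =>
        if q.1 = z.1 then [(q, x.2.1.2 + z.2)] else [])) :=
      Primrec.list_flatMap (f := fun y : X × (Fin k × Posn m) => y.1.1)
        (g := fun y q => if q.1 = y.2.1 then [(q, y.1.2.1.2 + y.2.2)] else [])
        (Primrec.fst.comp Primrec.fst) h0
    have h2 : Primrec (fun x : X => ([x.2.1], x.2.2.flatMap (fun z => x.1.flatMap (fun q =>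
        if q.1 = z.1 then [(q, x.2.1.2 + z.2)] else [])))) :=
      Primrec.pair (Primrec.list_cons.comp (Primrec.fst.comp Primrec.snd) (Primrec.const []))
        (Primrec.list_flatMap (Primrec.snd.comp Primrec.snd) h1)
    exact h2.to_comp
  · intro T v
    simp only [SatClause, AxCover, decide_eq_true_eq]
    constructor
    · intro h p g M hM hv
      obtain ⟨a, h4, h5⟩ := h ((p, g), M) hM (by simpa using hv)
      simp only [List.mem_flatMap] at h4
      obtain ⟨z, hz, q, hq, h4⟩ := h4
      split_ifs at h4 with hqz
      · rw [List.mem_singleton] at h4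
        exact ⟨z, hz, q, hq, hqz, h4 ▸ h5⟩
      · simp at h4
    · rintro h ⟨⟨p, g⟩, M⟩ hM hv
      obtain ⟨z, hz, q, hq, hqz, h5⟩ := h p g M hM (hv _ (by simp))
      refine ⟨_, ?_, h5⟩
      simp only [List.mem_flatMap]
      exact ⟨z, hz, q, hq, by simp [hqz]⟩

theorem normDisp_primrec (aU aV : Fin k → Posn m) : Primrec (normDisp aU aV) := by
  have h : Primrec₂ (fun (_ : Disp k) (x : (Fin k × ℤ × ℤ) × Posn m) =>
      (x.1.2.1 • aU x.1.1 + x.1.2.2 • aV x.1.1) + x.2) := by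
    have hx : Primrec (fun y : Disp k × ((Fin k × ℤ × ℤ) × Posn m) => y.2.1) :=
      Primrec.fst.comp Primrec.snd
    have h1 := (posn_primrec_smul m k aU).comp (Primrec.fst.comp hx)
      (Primrec.fst.comp (Primrec.snd.comp hx))
    have h2 := (posn_primrec_smul m k aV).comp (Primrec.fst.comp hx)
      (Primrec.snd.comp (Primrec.snd.comp hx))
    exact (posn_primrec_add m).comp ((posn_primrec_add m).comp h1 h2)
      (Primrec.snd.comp Primrec.snd)
  exact Primrec.list_foldr Primrec.id (Primrec.const 0) h

theorem axForb_ax (x0 : TVar k m) (F : ℕ → PatternCode k) (hF : Computable F)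
    (canon : Fin k → Fin k) (aU aV aP : Fin k → Posn m) :
    ClauseAx (fun (_ : List (SymbTile k)) v => AxForb F canon aU aV aP v) := by
  classical
  refine (ClauseAx.of_cond (α := List (SymbTile k))
    (J := (ℕ × Posn m) × List (TVar k m)) x0
    (fun x => decide (x.2.2.map (fun a => (canon a.1.1, a.2)) =
      (F x.2.1.1).map (fun e => (canon e.1, x.2.1.2 + (aP e.1 + normDisp aU aV e.2))))) ?_
    (fun x => (x.2.2, [])) ?_).congr ?_
  · have hL : Primrec (fun x : List (SymbTile k) × (ℕ × Posn m) × List (TVar k m) =>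
        x.2.2.map (fun a => (canon a.1.1, a.2))) :=
      Primrec.list_map (Primrec.snd.comp Primrec.snd)
        (Primrec.pair ((Primrec.dom_finite canon).comp (Primrec.fst.comp
          (Primrec.fst.comp Primrec.snd))) (Primrec.snd.comp Primrec.snd)).to₂
    have hG : Primrec (fun x : Posn m × PatternCode k =>
        x.2.map (fun e => (canon e.1, x.1 + (aP e.1 + normDisp aU aV e.2)))) := by
      have he : Primrec (fun y : (Posn m × PatternCode k) × (Fin k × Disp k) => y.2) :=
        Primrec.snd
      exact Primrec.list_map Primrec.snd
        (Primrec.pair ((Primrec.dom_finite canon).comp (Primrec.fst.comp he))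
          ((posn_primrec_add m).comp (Primrec.fst.comp Primrec.fst)
            ((posn_primrec_add m).comp ((Primrec.dom_finite aP).comp (Primrec.fst.comp he))
              ((normDisp_primrec aU aV).comp (Primrec.snd.comp he))))).to₂
    have hn : Computable (fun x : List (SymbTile k) × (ℕ × Posn m) × List (TVar k m) =>
        F x.2.1.1) :=
      hF.comp (Primrec.fst.comp (Primrec.fst.comp Primrec.snd)).to_comp
    have hw : Computable (fun x : List (SymbTile k) × (ℕ × Posn m) × List (TVar k m) =>
        x.2.1.2) :=
      (Primrec.snd.comp (Primrec.fst.comp Primrec.snd)).to_comp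
    have hR := hG.to_comp.comp (hw.pair hn)
    have heq : Primrec (fun x : List (Fin k × Posn m) × List (Fin k × Posn m) =>
        decide (x.1 = x.2)) := (Primrec.eq (α := List (Fin k × Posn m))).decide
    exact heq.to_comp.comp (hL.to_comp.pair hR)
  · have h : Primrec (fun x : List (SymbTile k) × (ℕ × Posn m) × List (TVar k m) =>
        (x.2.2, ([] : List (TVar k m)))) :=
      Primrec.pair (Primrec.snd.comp Primrec.snd) (Primrec.const [])
    exact h.to_comp
  · intro T v
    simp only [SatClause, AxForb, decide_eq_true_eq]
    constructor
    · intro h n w L h1 h2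
      obtain ⟨_, h4, _⟩ := h ((n, w), L) h1 h2
      simp at h4
    · rintro h ⟨⟨n, w⟩, L⟩ h1 h2
      exact (h n w L h1 h2).elim

end
/-! ### Part E: finite local tables and the equivalence -/

section
variable {k m : ℕ} (shapes : Fin k → Rhombus) (φ : Posn m →+ Pt)

/-- Tiles sharing a vertex with the tile of shape `i` at the origin. -/
def NbT (i : Fin k) : Set (Fin k × Posn m) :=
  {z | VAdj (tl shapes i 0) (tl shapes z.1 (φ z.2))}

/-- Incompatible pairs of neighbours. -/
def BadT : Set (Fin k × (Fin k × Posn m) × (Fin k × Posn m)) :=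
  {x | x.2.1 ∈ NbT shapes φ x.1 ∧ x.2.2 ∈ NbT shapes φ x.1 ∧
    tl shapes x.2.1.1 (φ x.2.1.2) ≠ tl shapes x.2.2.1 (φ x.2.2.2) ∧
    ¬ EdgeToEdgePair (tl shapes x.2.1.1 (φ x.2.1.2)) (tl shapes x.2.2.1 (φ x.2.2.2))}

/-- Pairs of edges that have to carry the same colour. -/
def EdgeT : Set ((Fin 4 × Fin 4) × (Fin k × Fin k) × Posn m) :=
  {x | (x.2.1.2, x.2.2) ∈ NbT shapes φ x.2.1.1 ∧
    ((tl shapes x.2.1.1 0 ≠ tl shapes x.2.1.2 (φ x.2.2) ∧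
      (tl shapes x.2.1.1 0).edge x.1.1 = (tl shapes x.2.1.2 (φ x.2.2)).edge x.1.2) ∨
     (tl shapes x.2.1.1 0 = tl shapes x.2.1.2 (φ x.2.2) ∧ x.1.1 = x.1.2))}

/-- The tiles of `C` cover a neighbourhood of the tile of shape `i` at the origin. -/
def Covers (i : Fin k) (C : Set (Fin k × Posn m)) : Prop :=
  ∃ ε > 0, ∀ p ∈ (tl shapes i 0).support, ∀ q, dist q p ≤ ε →
    ∃ z ∈ C, q ∈ (tl shapes z.1 (φ z.2)).support

open Classical in
/-- A list enumerating a finite set. -/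
def lst {β : Type} (s : Set β) : List β := if h : s.Finite then h.toFinset.toList else []

theorem mem_lst {β : Type} {s : Set β} (hs : s.Finite) (b : β) : b ∈ lst s ↔ b ∈ s := by
  simp [lst, hs]

/-- Lists of neighbours one of which has to be present. -/
def CoverT : Set (Fin k × List (Fin k × Posn m)) :=
  (fun x : Fin k × Set (Fin k × Posn m) => (x.1, lst (NbT shapes φ x.1 \ x.2))) ''
    {x | x.2 ⊆ NbT shapes φ x.1 ∧ ¬ Covers shapes φ x.1 x.2}

variable {φ}

theorem NbT_finite (hφ : Function.Injective φ) (i : Fin k) : (NbT shapes φ i).Finite := by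
  have h : (⋃ j : Fin k, (fun d : Posn m => (j, d)) '' (φ ⁻¹' (Ds shapes i j))).Finite :=
    Set.finite_iUnion fun j =>
      ((Ds_finite shapes i j).preimage hφ.injOn).image _
  refine h.subset ?_
  rintro ⟨j, d⟩ hz
  refine Set.mem_iUnion.2 ⟨j, d, ?_, rfl⟩
  have := vadj_diff shapes hz
  simpa using this

theorem NbU_finite (hφ : Function.Injective φ) : (⋃ i, NbT shapes φ i).Finite :=
  Set.finite_iUnion fun i => NbT_finite shapes hφ i

theorem BadT_finite (hφ : Function.Injective φ) : (BadT shapes φ).Finite := by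
  refine (Set.finite_univ.prod ((NbU_finite shapes hφ).prod (NbU_finite shapes hφ))).subset ?_
  rintro ⟨i, z, z'⟩ ⟨h1, h2, -⟩
  exact ⟨trivial, Set.mem_iUnion.2 ⟨i, h1⟩, Set.mem_iUnion.2 ⟨i, h2⟩⟩

theorem EdgeT_finite (hφ : Function.Injective φ) : (EdgeT shapes φ).Finite := by
  refine (Set.finite_univ.prod (Set.finite_univ.prod
    ((NbU_finite shapes hφ).image Prod.snd))).subset ?_
  rintro ⟨⟨e, f⟩, ⟨i, j⟩, d⟩ ⟨h1, -⟩
  exact ⟨trivial, trivial, (j, d), Set.mem_iUnion.2 ⟨i, h1⟩, rfl⟩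

theorem CoverT_finite (hφ : Function.Injective φ) : (CoverT shapes φ).Finite := by
  refine Set.Finite.image _ ?_
  refine (Set.finite_univ.prod (NbU_finite shapes hφ).finite_subsets).subset ?_
  rintro ⟨i, C⟩ ⟨h1, -⟩
  exact ⟨trivial, h1.trans (Set.subset_iUnion (NbT shapes φ) i)⟩

theorem shift_eq (o : Pt) (g h : Posn m) : o + φ h = φ (h - g) + (o + φ g) := by
  rw [map_sub]; abel

theorem mem_NbT_iff (o : Pt) (i j : Fin k) (g h : Posn m) :
    (j, h - g) ∈ NbT shapes φ i ↔ VAdj (tl shapes i (o + φ g)) (tl shapes j (o + φ h)) := by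
  have := tl_vadj_iff shapes i j 0 (φ (h - g)) (o + φ g)
  rw [zero_add, ← shift_eq] at this
  exact this.symm

/-- A canonical choice of an index for each shape. -/
theorem exists_canon : ∃ canon : Fin k → Fin k, ∀ i j, canon i = canon j ↔
    (shapes i).u = (shapes j).u ∧ (shapes i).v = (shapes j).v := by
  let g : Fin k → Pt × Pt := fun i => ((shapes i).u, (shapes i).v)
  have hc : ∀ y : Set.range g, ∃ j, g j = y := fun y => y.2
  choose c hc using hc
  refine ⟨fun i => c ⟨g i, i, rfl⟩, fun i j => ?_⟩
  constructor
  · intro h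
    have h1 := hc ⟨g i, i, rfl⟩
    have h2 := hc ⟨g j, j, rfl⟩
    simp only at h h1 h2
    rw [h, h2] at h1
    exact ⟨(congrArg Prod.fst h1).symm, (congrArg Prod.snd h1).symm⟩
  · intro h
    have : g i = g j := Prod.ext h.1 h.2
    simp only [this]

theorem normDisp_spec {aU aV : Fin k → Posn m} (hU : ∀ i, φ (aU i) = (shapes i).u)
    (hV : ∀ i, φ (aV i) = (shapes i).v) (d : Disp k) :
    φ (normDisp aU aV d) = dispVec shapes d := by
  induction d with
  | nil => simp [normDisp, dispVec]
  | cons e d ih =>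
    have h1 : normDisp aU aV (e :: d) =
      (e.2.1 • aU e.1 + e.2.2 • aV e.1) + normDisp aU aV d := rfl
    have h2 : dispVec shapes (e :: d) =
      ((e.2.1 : ℝ) • (shapes e.1).u + (e.2.2 : ℝ) • (shapes e.1).v) + dispVec shapes d := by
      simp [dispVec]
    rw [h1, h2, map_add, map_add, map_zsmul, map_zsmul, hU, hV, ih,
      Int.cast_smul_eq_zsmul, Int.cast_smul_eq_zsmul]

theorem realizes_eq {t : ColoredRhombus} {p : SymbTile k} (h : Realizes shapes t p) :
    t = ⟨tl shapes p.1 t.shape.pos, SymbTile.colors p⟩ := by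
  obtain ⟨s, c⟩ := t
  obtain ⟨h1, h2⟩ := h
  simp only at h1 h2
  rw [ColoredRhombus.mk.injEq]
  exact ⟨eq_tl shapes h1, h2⟩

theorem Ds_range (hr : ∀ i, (shapes i).u ∈ φ.range ∧ (shapes i).v ∈ φ.range) (i j : Fin k)
    {z : Pt} (hz : z ∈ Ds shapes i j) : ∃ d, φ d = z := by
  have hV : ∀ i, ∀ α ∈ Vs shapes i, α ∈ φ.range := by
    intro i α hα
    simp only [Vs, Set.mem_insert_iff, Set.mem_singleton_iff] at hα
    rcases hα with rfl | rfl | rfl | rfl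
    · exact zero_mem _
    · exact (hr i).1
    · exact (hr i).2
    · exact add_mem (hr i).1 (hr i).2
  obtain ⟨α, hα, β, hβ, rfl⟩ := hz
  exact sub_mem (hV i α hα) (hV j β hβ)

/-- All the local conditions. -/
def AllAx (φ : Posn m →+ Pt) (F : ℕ → PatternCode k) (canon : Fin k → Fin k)
    (aU aV aP : Fin k → Posn m) (T : List (SymbTile k)) (v : Set (TVar k m)) : Prop :=
  AxRoot T v ∧ AxIn T v ∧ AxGeo (BadT shapes φ) v ∧ AxCol (EdgeT shapes φ) v ∧
    AxCover (CoverT shapes φ) T v ∧ AxForb F canon aU aV aP v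

theorem allAx_ax (hφ : Function.Injective φ) (x0 : TVar k m) (F : ℕ → PatternCode k)
    (hF : Computable F) (canon : Fin k → Fin k) (aU aV aP : Fin k → Posn m) :
    ClauseAx (AllAx shapes φ F canon aU aV aP) :=
  axRoot_ax.and ((axIn_ax x0).and ((axGeo_ax x0 (BadT_finite shapes hφ)).and
    ((axCol_ax x0 (EdgeT_finite shapes hφ)).and ((axCover_ax x0 (CoverT_finite shapes hφ)).and
      (axForb_ax x0 F hF canon aU aV aP)))))

theorem domino_forward (hval : ∀ i, (shapes i).IsValid) (hφ : Function.Injective φ)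
    (F : ℕ → PatternCode k) {canon : Fin k → Fin k}
    (hcan : ∀ i j, canon i = canon j ↔
      (shapes i).u = (shapes j).u ∧ (shapes i).v = (shapes j).v)
    {aU aV aP : Fin k → Posn m} (hU : ∀ i, φ (aU i) = (shapes i).u)
    (hV : ∀ i, φ (aV i) = (shapes i).v) (hP : ∀ i, φ (aP i) = (shapes i).pos)
    (T : List (SymbTile k))
    (h : DominoPred shapes
      (SubshiftOfForbidden (Set.range shapes) (fun n => decodePattern shapes (F n))) T) :
    ∃ v, AllAx shapes φ F canon aU aV aP T v := by
  obtain ⟨x, ⟨hx1, hinj, hcol⟩, hT, hxT, hforb⟩ := h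
  have hr : ∀ i, (shapes i).u ∈ φ.range ∧ (shapes i).v ∈ φ.range := fun i =>
    ⟨⟨aU i, hU i⟩, ⟨aV i, hV i⟩⟩
  have h0 : (0 : Pt) ∈ ⋃ r ∈ eraseColors x, r.support := by rw [hx1.2.1]; trivial
  obtain ⟨_, ⟨t0, ht0, rfl⟩, -⟩ := Set.mem_iUnion₂.1 h0
  obtain ⟨o, ho⟩ : ∃ o, o = t0.shape.pos := ⟨_, rfl⟩
  let v : Set (TVar k m) := {a | a.1 ∈ T ∧
    (⟨tl shapes a.1.1 (o + φ a.2), SymbTile.colors a.1⟩ : ColoredRhombus) ∈ x}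
  have hsh : ∀ a ∈ v, tl shapes a.1.1 (o + φ a.2) ∈ eraseColors x := fun a ha =>
    ⟨_, ha.2, rfl⟩
  refine ⟨v, ?_, fun a ha => ha.1, ?_, ?_, ?_, ?_⟩
  · obtain ⟨p, hp, hrp⟩ := hT t0 ht0
    refine ⟨p, hp, hp, ?_⟩
    have := realizes_eq shapes hrp
    rw [map_zero, add_zero, ho, ← this]
    exact ht0
  · rintro p q r g d d' ⟨-, -, hne, hbad⟩ - hq hr
    simp only at hne hbad
    have e1 : ∀ d, o + φ (g + d) = φ d + (o + φ g) := fun d => by rw [map_add]; abel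
    have h1 := hsh _ hq
    have h2 := hsh _ hr
    simp only [e1] at h1 h2
    refine hbad ((tl_e2e_iff shapes _ _ _ _ (o + φ g)).1 (hx1.2.2 _ h1 _ h2 ?_))
    rw [Ne, tl_eq_iff]
    exact hne
  · rintro p q g d e f ⟨-, hcase⟩ hp hq
    simp only at hcase
    have e1 : o + φ (g + d) = φ d + (o + φ g) := by rw [map_add]; abel
    have h1 : (⟨tl shapes p.1 (0 + (o + φ g)), SymbTile.colors p⟩ : ColoredRhombus) ∈ x := by
      rw [zero_add]; exact hp.2
    have h2 : (⟨tl shapes q.1 (φ d + (o + φ g)), SymbTile.colors q⟩ : ColoredRhombus) ∈ x := by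
      rw [← e1]; exact hq.2
    rcases hcase with ⟨hne, he⟩ | ⟨heq, he⟩
    · have hne' := mt (tl_eq_iff shapes _ _ _ _ (o + φ g)).1 hne
      have he' := (tl_edge_iff shapes _ _ _ _ (o + φ g) _ _).2 he
      exact hcol _ h1 _ h2 hne' e f he'
    · have heq' := (tl_eq_iff shapes _ _ _ _ (o + φ g)).2 heq
      have := hinj _ h1 _ h2 heq'
      rw [ColoredRhombus.mk.injEq] at this
      rw [this.2, he]
  · rintro p g M ⟨⟨i, C⟩, ⟨hC, hcov⟩, hM⟩ hpv
    simp only [Prod.mk.injEq] at hM hC hcov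
    obtain ⟨rfl, rfl⟩ := hM
    by_contra hno
    refine hcov ?_
    obtain ⟨ε, hε, hcor⟩ := corona_cover shapes hval hxT (hsh _ hpv)
    refine ⟨ε, hε, fun p' hp' q hq => ?_⟩
    obtain ⟨s, ⟨c, hc, rfl⟩, hadj, hqs⟩ := hcor (p' + (o + φ g))
      (by
        have := (tl_mem_support shapes p.1 0 (o + φ g) p').2 hp'
        rwa [zero_add] at this)
      (q + (o + φ g)) (by rwa [dist_add_right])
    obtain ⟨p2, hp2, hr2⟩ := hT c hc
    have hc2 := realizes_eq shapes hr2
    have hs : c.shape = tl shapes p2.1 c.shape.pos := congrArg ColoredRhombus.shape hc2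
    rw [hs] at hadj
    obtain ⟨d, hd⟩ := Ds_range shapes hr _ _ (vadj_diff shapes hadj)
    have hpos : c.shape.pos = φ d + (o + φ g) := by
      rw [hd]; simp
    have hpos' : c.shape.pos = o + φ (g + d) := by
      rw [hpos, map_add]; abel
    have hmem : (p2.1, d) ∈ NbT shapes φ p.1 := by
      rw [hpos] at hadj
      simp only at hadj
      rw [← zero_add (o + φ g), ← add_assoc (φ d), add_zero] at hadj
      exact (tl_vadj_iff shapes _ _ _ _ _).1 hadj
    have hv2 : (p2, g + d) ∈ v := by
      refine ⟨hp2, ?_⟩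
      simp only
      rw [← hpos', ← hc2]; exact hc
    refine ⟨(p2.1, d), ?_, ?_⟩
    · by_contra hnC
      refine hno ⟨(p2.1, d), ?_, p2, hp2, rfl, hv2⟩
      exact (mem_lst ((NbT_finite shapes hφ _).subset Set.sdiff_subset) _).2 ⟨hmem, hnC⟩
    · rw [hs, hpos] at hqs
      exact (tl_mem_support shapes _ _ _ _).1 hqs
  · intro n w L hL hLv
    refine hforb n ⟨o + φ w, ?_⟩
    rintro _ ⟨_, ⟨e, he, rfl⟩, rfl⟩
    have hm : (canon e.1, w + (aP e.1 + normDisp aU aV e.2)) ∈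
        (F n).map (fun e => (canon e.1, w + (aP e.1 + normDisp aU aV e.2))) :=
      List.mem_map.2 ⟨e, he, rfl⟩
    rw [← hL] at hm
    obtain ⟨a, ha, hae⟩ := List.mem_map.1 hm
    simp only [Prod.mk.injEq] at hae
    have hh := (hcan _ _).1 hae.1
    have h1 := hsh a (hLv a ha)
    have : ((shapes e.1).translate (dispVec shapes e.2)).translate (o + φ w) =
        tl shapes a.1.1 (o + φ a.2) := by
      simp only [Rhombus.translate, tl, hae.2, map_add, hP, normDisp_spec shapes hU hV, hh]
      congr 1
      abel
    simp only
    rw [this]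
    exact h1


theorem eventually_small {P : ℝ → Prop} {δ₀ : ℝ} (h0 : 0 < δ₀) (h : ∀ δ ≤ δ₀, P δ) :
    ∀ᶠ δ in nhdsWithin (0 : ℝ) (Ioi 0), P δ := by
  filter_upwards [Ioc_mem_nhdsGT h0] with δ hδ
  exact h δ hδ.2

theorem compact_sep {K K' : Set Pt} (hK : IsCompact K) (hK' : IsCompact K') :
    ∃ δ > 0, ∀ q ∈ K, ∀ q' ∈ K', dist q q' ≤ δ → (K ∩ K').Nonempty := by
  by_cases hne : (K ∩ K').Nonempty
  · exact ⟨1, one_pos, fun _ _ _ _ _ => hne⟩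
  · have hd : Disjoint K K' := by
      rw [Set.disjoint_iff_inter_eq_empty]; exact Set.not_nonempty_iff_eq_empty.1 hne
    obtain ⟨δ, hδ, h⟩ := hd.exists_thickenings hK hK'.isClosed
    refine ⟨δ / 2, half_pos hδ, fun q hq q' hq' hqq => ?_⟩
    have g1 : q' ∈ thickening δ K := by
      rw [mem_thickening_iff]
      exact ⟨q, hq, by rw [dist_comm]; linarith⟩
    have g2 : q' ∈ thickening δ K' := self_subset_thickening hδ _ hq'
    exact (Set.disjoint_left.1 h g1 g2).elim

theorem exists_delta (hφ : Function.Injective φ) : ∃ δ > 0,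
    (∀ i, ∀ z ∈ NbT shapes φ i, ∀ z' ∈ NbT shapes φ i,
      ∀ q ∈ (tl shapes z.1 (φ z.2)).support, ∀ q' ∈ (tl shapes z'.1 (φ z'.2)).support,
      dist q q' ≤ δ →
        ((tl shapes z.1 (φ z.2)).support ∩ (tl shapes z'.1 (φ z'.2)).support).Nonempty) ∧
    (∀ i, ∀ C ∈ {C | C ⊆ NbT shapes φ i}, Covers shapes φ i C →
      ∀ p ∈ (tl shapes i 0).support, ∀ q, dist q p ≤ 2 * δ →
        ∃ z ∈ C, q ∈ (tl shapes z.1 (φ z.2)).support) := by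
  have h1 : ∀ᶠ δ in nhdsWithin (0 : ℝ) (Ioi 0),
      ∀ i, ∀ z ∈ NbT shapes φ i, ∀ z' ∈ NbT shapes φ i,
      ∀ q ∈ (tl shapes z.1 (φ z.2)).support, ∀ q' ∈ (tl shapes z'.1 (φ z'.2)).support,
      dist q q' ≤ δ →
        ((tl shapes z.1 (φ z.2)).support ∩ (tl shapes z'.1 (φ z'.2)).support).Nonempty := by
    rw [Filter.eventually_all]
    intro i
    rw [Filter.eventually_all_finite (NbT_finite shapes hφ i)]
    intro z hz
    rw [Filter.eventually_all_finite (NbT_finite shapes hφ i)]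
    intro z' hz'
    obtain ⟨δ₀, h0, h⟩ := compact_sep (tl shapes z.1 (φ z.2)).isCompact_support
      (tl shapes z'.1 (φ z'.2)).isCompact_support
    exact eventually_small h0 fun δ hδ q hq q' hq' hd => h q hq q' hq' (hd.trans hδ)
  have h2 : ∀ᶠ δ in nhdsWithin (0 : ℝ) (Ioi 0),
      ∀ i, ∀ C ∈ {C | C ⊆ NbT shapes φ i}, Covers shapes φ i C →
      ∀ p ∈ (tl shapes i 0).support, ∀ q, dist q p ≤ 2 * δ →
        ∃ z ∈ C, q ∈ (tl shapes z.1 (φ z.2)).support := by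
    rw [Filter.eventually_all]
    intro i
    rw [Filter.eventually_all_finite (NbT_finite shapes hφ i).finite_subsets]
    intro C hC
    by_cases hcov : Covers shapes φ i C
    · obtain ⟨ε, hε, h⟩ := hcov
      refine eventually_small (half_pos hε) fun δ hδ _ p hp q hq => h p hp q ?_
      linarith
    · exact Filter.Eventually.of_forall fun δ h => (hcov h).elim
  obtain ⟨δ, ⟨ha, hb⟩, hpos⟩ := ((h1.and h2).and self_mem_nhdsWithin).exists
  exact ⟨δ, hpos, ha, hb⟩

theorem domino_backward (hval : ∀ i, (shapes i).IsValid) (hφ : Function.Injective φ)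
    (F : ℕ → PatternCode k) {canon : Fin k → Fin k}
    (hcan : ∀ i j, canon i = canon j ↔
      (shapes i).u = (shapes j).u ∧ (shapes i).v = (shapes j).v)
    {aU aV aP : Fin k → Posn m} (hU : ∀ i, φ (aU i) = (shapes i).u)
    (hV : ∀ i, φ (aV i) = (shapes i).v) (hP : ∀ i, φ (aP i) = (shapes i).pos)
    (T : List (SymbTile k)) {v : Set (TVar k m)}
    (h : AllAx shapes φ F canon aU aV aP T v) :
    DominoPred shapes
      (SubshiftOfForbidden (Set.range shapes) (fun n => decodePattern shapes (F n))) T := by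
  obtain ⟨⟨p0, hp0, hp0v⟩, hIn, hGeo, hCol, hCov, hForb⟩ := h
  obtain ⟨δ, hδ, hD1, hD2⟩ := exists_delta shapes hφ
  let tile : TVar k m → Rhombus := fun a => tl shapes a.1.1 (φ a.2)
  have hsh : ∀ g h : Posn m, φ h = φ (h - g) + φ g := fun g h => by rw [map_sub]; abel
  have hnb : ∀ a b : TVar k m, (b.1.1, b.2 - a.2) ∈ NbT shapes φ a.1.1 ↔
      VAdj (tile a) (tile b) := by
    intro a b
    have := mem_NbT_iff shapes (φ := φ) 0 a.1.1 b.1.1 a.2 b.2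
    simpa only [zero_add] using this
  have hsupp : ∀ (a b : TVar k m) (q : Pt), q ∈ (tile b).support ↔
      q - φ a.2 ∈ (tl shapes b.1.1 (φ (b.2 - a.2))).support := by
    intro a b q
    have := tl_mem_support shapes b.1.1 (φ (b.2 - a.2)) (φ a.2) (q - φ a.2)
    rw [sub_add_cancel, ← hsh] at this
    exact this
  -- compatibility of two neighbours of a common tile
  have hgood : ∀ a ∈ v, ∀ b ∈ v, ∀ c ∈ v, VAdj (tile a) (tile b) → VAdj (tile a) (tile c) →
      tile b ≠ tile c → EdgeToEdgePair (tile b) (tile c) := by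
    intro a ha b hb c hc hab hac hne
    by_contra hnot
    refine hGeo a.1 b.1 c.1 a.2 (b.2 - a.2) (c.2 - a.2)
      ⟨(hnb a b).2 hab, (hnb a c).2 hac, ?_, ?_⟩ ha ?_ ?_
    · intro heq
      refine hne ?_
      have := (tl_eq_iff shapes _ _ _ _ (φ a.2)).2 heq
      simp only at this
      rw [← hsh, ← hsh] at this
      exact this
    · intro he
      refine hnot ?_
      have := (tl_e2e_iff shapes _ _ _ _ (φ a.2)).2 he
      simp only at this
      rw [← hsh, ← hsh] at this
      exact this
    · rw [add_sub_cancel]; exact hb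
    · rw [add_sub_cancel]; exact hc
  obtain ⟨Y, hYcov, hYadj⟩ := developing (ι := {a // a ∈ v})
    (fun a => (tile a.1).support) (fun a b => VAdj (tile a.1) (tile b.1)) δ hδ
    (fun a => (tile a.1).convex_support) (fun a b h => h.symm) (fun a => VAdj.refl _)
    (by
      rintro ⟨a, ha⟩ ⟨b, hb⟩ ⟨c, hc⟩ hab hac q hq q' hq' hd
      simp only at hab hac hq hq' ⊢
      by_cases heq : tile b = tile c
      · rw [heq]; exact VAdj.refl _
      refine vadj_of_e2e (hgood a ha b hb c hc hab hac heq) ?_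
      obtain ⟨y, hy1, hy2⟩ := hD1 a.1.1 _ ((hnb a b).2 hab) _ ((hnb a c).2 hac)
        _ ((hsupp a b q).1 hq) _ ((hsupp a c q').1 hq') (by rwa [dist_sub_right])
      refine ⟨y + φ a.2, ?_, ?_⟩
      · rw [hsupp a b, add_sub_cancel_right]; exact hy1
      · rw [hsupp a c, add_sub_cancel_right]; exact hy2)
    (by
      rintro ⟨a, ha⟩ p hp q hq
      simp only at hp ⊢
      let C : Set (Fin k × Posn m) := {z ∈ NbT shapes φ a.1.1 | ∃ b ∈ v, b.1.1 = z.1 ∧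
        b.2 = a.2 + z.2}
      have hCsub : C ⊆ NbT shapes φ a.1.1 := Set.sep_subset _ _
      have hC : Covers shapes φ a.1.1 C := by
        by_contra hnc
        obtain ⟨z, hz, b, hb, hbz, hbv⟩ := hCov a.1 a.2 (lst (NbT shapes φ a.1.1 \ C))
          ⟨(a.1.1, C), ⟨hCsub, hnc⟩, rfl⟩ ha
        rw [mem_lst ((NbT_finite shapes hφ _).subset Set.sdiff_subset)] at hz
        exact hz.2 ⟨hz.1, _, hbv, hbz, rfl⟩
      have hp' : p - φ a.2 ∈ (tl shapes a.1.1 0).support := by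
        have := (hsupp a a p).1 hp
        rwa [sub_self, map_zero] at this
      obtain ⟨z, ⟨hzN, b, hb, hb1, hb2⟩, hqz⟩ := hD2 a.1.1 C hCsub hC _ hp' (q - φ a.2)
        (by rwa [dist_sub_right])
      have hz : z = (b.1.1, b.2 - a.2) := Prod.ext hb1.symm (by rw [hb2]; simp)
      rw [hz] at hzN hqz
      exact ⟨⟨b, hb⟩, (hnb a b).1 hzN, (hsupp a b q).2 hqz⟩)
    ⟨(p0, 0), hp0v⟩
    (by
      refine Rhombus.vertices_subset _ ?_
      simp [tile, tl, Rhombus.vertices])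
  let col : TVar k m → ColoredRhombus := fun a => ⟨tile a, SymbTile.colors a.1⟩
  let x : Set ColoredRhombus := {t | ∃ a ∈ Y, t = col a.1}
  have herase : ∀ r ∈ eraseColors x, ∃ a ∈ Y, r = tile a.1 := by
    rintro _ ⟨_, ⟨a, ha, rfl⟩, rfl⟩
    exact ⟨a, ha, rfl⟩
  have htiling : IsTiling (eraseColors x) := by
    refine ⟨?_, ?_, ?_⟩
    · intro r hr
      obtain ⟨a, -, rfl⟩ := herase r hr
      exact hval a.1.1.1
    · refine Set.eq_univ_of_forall fun p => ?_
      obtain ⟨a, ha, hpa⟩ := hYcov p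
      exact Set.mem_iUnion₂.2 ⟨tile a.1, ⟨col a.1, ⟨a, ha, rfl⟩, rfl⟩, hpa⟩
    · intro r hr s hs hne
      obtain ⟨a, ha, rfl⟩ := herase r hr
      obtain ⟨b, hb, rfl⟩ := herase s hs
      by_cases hi : ((tile a.1).support ∩ (tile b.1).support).Nonempty
      · exact hgood a.1 a.2 a.1 a.2 b.1 b.2 (VAdj.refl _) (hYadj a ha b hb hi) hne
      · exact Or.inl (Set.not_nonempty_iff_eq_empty.1 hi)
  have hbase : ∀ a b : TVar k m, tl shapes a.1.1 0 = tl shapes b.1.1 (φ (b.2 - a.2)) ↔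
      tile a = tile b := by
    intro a b
    have := tl_eq_iff shapes a.1.1 b.1.1 0 (φ (b.2 - a.2)) (φ a.2)
    rw [zero_add, ← hsh] at this
    exact this.symm
  have hcolor : ∀ a ∈ v, ∀ b ∈ v, ∀ e f : Fin 4,
      ((e, f), (a.1.1, b.1.1), b.2 - a.2) ∈ EdgeT shapes φ →
      SymbTile.colors a.1 e = SymbTile.colors b.1 f := by
    intro a ha b hb e f hef
    refine hCol a.1 b.1 a.2 (b.2 - a.2) e f hef ha ?_
    rw [add_sub_cancel]; exact hb
  refine ⟨x, ⟨htiling, ?_, ?_⟩, ?_, ⟨htiling, ?_⟩, ?_⟩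
  · rintro _ ⟨a, ha, rfl⟩ _ ⟨b, hb, rfl⟩ heq
    simp only [col] at heq ⊢
    rw [ColoredRhombus.mk.injEq]
    refine ⟨heq, funext fun e => hcolor a.1 a.2 b.1 b.2 e e ⟨?_, Or.inr ⟨?_, rfl⟩⟩⟩
    · refine (hnb a.1 b.1).2 ?_
      rw [heq]; exact VAdj.refl _
    · exact (hbase a.1 b.1).2 heq
  · rintro _ ⟨a, ha, rfl⟩ _ ⟨b, hb, rfl⟩ hne e f hef
    simp only [col] at hne hef ⊢
    refine hcolor a.1 a.2 b.1 b.2 e f ⟨?_, Or.inl ⟨?_, ?_⟩⟩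
    · exact (hnb a.1 b.1).2 (vadj_of_edge_eq hef)
    · exact mt (hbase a.1 b.1).1 hne
    · have := tl_edge_iff shapes a.1.1.1 b.1.1.1 0 (φ (b.1.2 - a.1.2)) (φ a.1.2) e f
      rw [zero_add, ← hsh] at this
      exact this.1 hef
  · rintro _ ⟨a, ha, rfl⟩
    exact ⟨a.1.1, hIn _ a.2, ⟨rfl, rfl⟩, rfl⟩
  · intro r hr
    obtain ⟨a, -, rfl⟩ := herase r hr
    exact ⟨shapes a.1.1.1, ⟨_, rfl⟩, rfl, rfl⟩
  · rintro n ⟨W, hW⟩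
    have hWe : ∀ e ∈ F n, ∃ a ∈ v, (shapes a.1.1).u = (shapes e.1).u ∧
        (shapes a.1.1).v = (shapes e.1).v ∧
        φ a.2 = (shapes e.1).pos + dispVec shapes e.2 + W := by
      intro e he
      obtain ⟨a, -, hae⟩ := herase _ (hW ⟨_, ⟨e, he, rfl⟩, rfl⟩)
      simp only [Rhombus.translate, tile, tl, Rhombus.mk.injEq] at hae
      exact ⟨a.1, a.2, hae.2.1.symm, hae.2.2.symm, hae.1.symm⟩
    have hpos : ∀ e : Fin k × Disp k, φ (aP e.1 + normDisp aU aV e.2) =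
        (shapes e.1).pos + dispVec shapes e.2 := by
      intro e
      rw [map_add, hP, normDisp_spec shapes hU hV]
    obtain ⟨w, hw⟩ : ∃ w : Posn m, ∀ e ∈ F n, φ w = W := by
      rcases List.eq_nil_or_concat (F n) with hnil | ⟨l, e, hle⟩
      · exact ⟨0, by simp [hnil]⟩
      · obtain ⟨a, -, -, -, ha⟩ := hWe e (by simp [hle])
        refine ⟨a.2 - (aP e.1 + normDisp aU aV e.2), fun _ _ => ?_⟩
        rw [map_sub, hpos, ha]; abel
    have hne : Nonempty (TVar k m) := ⟨(p0, 0)⟩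
    choose! f hfv hfu hfv' hfp using hWe
    refine hForb n w ((F n).map f) ?_ ?_
    · rw [List.map_map]
      refine List.map_congr_left fun e he => ?_
      simp only [Function.comp, Prod.mk.injEq]
      refine ⟨(hcan _ _).2 ⟨hfu e he, hfv' e he⟩, hφ ?_⟩
      rw [hfp e he, map_add, hw e he, hpos, add_comm W]
    · intro a ha
      obtain ⟨e, he, rfl⟩ := List.mem_map.1 ha
      exact hfv e he

end

theorem pi01_false {α : Type} [Primcodable α] {A : α → Prop} (h : ∀ a, ¬ A a) : Pi01 A :=
  ⟨fun _ _ => false, (Computable.const false).to₂, fun a => by simp [h a]⟩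

/-- For any subshift `X` of edge-to-edge rhombus tilings given by
a computable enumeration of forbidden patterns, the problem `Domino(X)` is
co-computably enumerable (`Π⁰₁`). -/
theorem statement_2 (k : ℕ) (shapes : Fin k → Rhombus)
    (hval : ∀ i, (shapes i).IsValid)
    (F : ℕ → PatternCode k) (hF : Computable F) :
    Pi01 (DominoPred shapes
      (SubshiftOfForbidden (Set.range shapes) (fun n => decodePattern shapes (F n)))) := by
  obtain ⟨m, φ, hφ, hr⟩ := exists_lattice shapes
  choose hu hv hp using hr
  choose aU hU using hu
  choose aV hV using hv
  choose aP hP using hp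
  obtain ⟨canon, hcan⟩ := exists_canon shapes
  by_cases hk : Nonempty (Fin k)
  · obtain ⟨i⟩ := hk
    exact (allAx_ax shapes hφ ((i, 0, 0, 0, 0), 0) F hF canon aU aV aP).pi01 _ fun T =>
      ⟨fun h => domino_forward shapes hval hφ F hcan hU hV hP T h,
        fun ⟨v, h⟩ => domino_backward shapes hval hφ F hcan hU hV hP T h⟩
  · refine pi01_false fun T h => ?_
    obtain ⟨v, ⟨p, -⟩, -⟩ := domino_forward shapes hval hφ F hcan hU hV hP T h
    exact hk ⟨p.1⟩
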